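/- Variance-aware regret bound (explicit form of the corollary): with σ̄_t = max{σ_t, R/√d} and λ = 1/B², for any 0 < δ < 1, with probability at least 1 − δ the pseudo-regret satisfies ∑_{t=1}^T (⟨a_t*, μ*⟩ − ⟨a_t, μ*⟩) ≤ 4d·ι₁ + 2·(8√(d·ι₁·ι₂) + 4√d·ι₂ + 1)·√(2d·ι₁)·√(TR²/d + ∑_{t=1}^T σ_t²), where ι₁ = log(1 + TA²B²/R²) and ι₂ = log(4T²/δ). -/

import Mathlib

/-!
The estimation error splits into a bias of size `√λ B` and the noise energy `Q_t`, the squared norm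
of `∑_{i ≤ t} σ̄_i^{-2} ε_i a_i` in `A_t^{-1}`. The point is that `√Q_t ≤ β̂_t` for all `t ≤ T` with
probability at least `1 - δ`. By the rank-one update formula, `Q_{i+1} - Q_i` is at most a quadratic
polynomial in `ε_{i+1}` with predictable coefficients controlled by the leverage of `a_{i+1}`, so
`exp (θ √(Q + c²))`, compensated by the leverages, is a supermartingale as long as `√Q` stays below
`β̂`. The best tilt `θ ≈ 4 log (4t²/δ) / β̂_t` depends on the random exit time `t`, so one
supermartingale is started at every step `j`, with the tilt of step `j + 1` and active while `β̂` is
at most `5/3` of its value there. At an exit from the region some `j` has its supermartingale above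
`2 (j + 1)²/δ`, and Markov's inequality together with `∑ (j + 1)⁻² ≤ 2` bounds the union of these
events by `δ`.

When `√Q_t ≤ β̂_t` for all `t ≤ T`, optimism bounds the regret of a round by twice the confidence
width, hence by a multiple of `σ̄_t √(leverage)`, and also by `2`. The log-determinant bounds the sum
of `log (1 + leverage)`, and Cauchy–Schwarz leaves the factor `√(∑ σ̄_t²)`.
-/

open MeasureTheory Matrix Finset

/-- `√(vᵀ A v)`, the (semi-)norm of `v` induced by a positive definite matrix `A`. -/
noncomputable def matNorm {d : ℕ} (A : Matrix (Fin d) (Fin d) ℝ) (v : Fin d → ℝ) : ℝ :=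
  Real.sqrt (v ⬝ᵥ (A *ᵥ v))

/-- The weighted Gram matrix `A_t = λ I + ∑_{i=1}^t σ̄_i^{-2} a_i a_iᵀ`. -/
noncomputable def wGram {d : ℕ} (lam : ℝ) (a : ℕ → Fin d → ℝ) (sb : ℕ → ℝ) (t : ℕ) :
    Matrix (Fin d) (Fin d) ℝ :=
  lam • (1 : Matrix (Fin d) (Fin d) ℝ) +
    ∑ i ∈ Finset.Icc 1 t, ((sb i) ^ 2)⁻¹ • vecMulVec (a i) (a i)

/-- The weighted ridge regression estimator `μ̂_t = A_t^{-1} ∑_{i=1}^t σ̄_i^{-2} r_i a_i`. -/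
noncomputable def wEst {d : ℕ} (lam : ℝ) (a : ℕ → Fin d → ℝ) (sb : ℕ → ℝ) (r : ℕ → ℝ)
    (t : ℕ) : Fin d → ℝ :=
  (wGram lam a sb t)⁻¹ *ᵥ ∑ i ∈ Finset.Icc 1 t, (((sb i) ^ 2)⁻¹ * r i) • a i

/-- `σ̄_{min,t} = min_{1 ≤ i ≤ t} σ̄_i`. -/
noncomputable def sbMin (sb : ℕ → ℝ) (t : ℕ) : ℝ := sInf (sb '' Set.Icc 1 t)

/-- `β̂_0 = 0` and
`β̂_t = 8√(d log(1 + tA²/(dλσ̄²_{min,t})) log(4t²/δ)) + 4(R/σ̄_{min,t}) log(4t²/δ)` for `t ≥ 1`. -/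
noncomputable def betaHat (d : ℕ) (A R lam δ : ℝ) (sb : ℕ → ℝ) (t : ℕ) : ℝ :=
  if t = 0 then 0 else
    8 * Real.sqrt ((d : ℝ) *
        Real.log (1 + (t : ℝ) * A ^ 2 / ((d : ℝ) * lam * (sbMin sb t) ^ 2)) *
        Real.log (4 * (t : ℝ) ^ 2 / δ)) +
      4 * (R / sbMin sb t) * Real.log (4 * (t : ℝ) ^ 2 / δ)

/-- The confidence set `C_t = {μ : ‖μ − μ̂_t‖_{A_t} ≤ β̂_t + √λ B}`. -/
noncomputable def confSet {d : ℕ} (lam B βh : ℝ) (At : Matrix (Fin d) (Fin d) ℝ)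
    (μh : Fin d → ℝ) : Set (Fin d → ℝ) :=
  {μ | matNorm At (μ - μh) ≤ βh + Real.sqrt lam * B}

theorem exp_le_one_add_add_sq {x : ℝ} (hx : x ≤ 17 / 10) : Real.exp x ≤ 1 + x + x ^ 2 := by
  rcases le_or_gt x (-1) with hx' | hx'
  · nlinarith [Real.exp_le_one_iff.2 (by linarith : x ≤ 0)]
  rcases le_or_gt x 1 with hx1 | hx1
  · linarith [(abs_le.1 (Real.abs_exp_sub_one_sub_id_le (abs_le.2 ⟨hx'.le, hx1⟩))).2]
  · obtain ⟨z, rfl⟩ : ∃ z, x = 1 + z := ⟨x - 1, by ring⟩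
    have hz : 0 ≤ z := by linarith
    have hz' : z ≤ 7 / 10 := by linarith
    have exp_z : Real.exp z ≤ 1 + z + z ^ 2 / 2 + z ^ 3 * 4 / 18 := by
      have := Real.exp_bound' hz (by linarith) (n := 3) (by norm_num)
      norm_num [Finset.sum_range_succ, Nat.factorial] at this
      linarith
    rw [Real.exp_add]
    calc Real.exp 1 * Real.exp z ≤ 2.7182818286 * (1 + z + z ^ 2 / 2 + z ^ 3 * 4 / 18) :=
          mul_le_mul Real.exp_one_lt_d9.le exp_z (Real.exp_pos _).le (by norm_num)
      _ ≤ 1 + (1 + z) + (1 + z) ^ 2 := by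
          nlinarith [mul_nonneg hz (sub_nonneg.2 hz'), mul_nonneg (sq_nonneg z) (sub_nonneg.2 hz')]

theorem exp_add_mul_sq_le {p b e R : ℝ} (hb : 0 ≤ b) (he : |e| ≤ R) (hp : |p| * R ≤ 5 / 6)
    (hbR : b * R ^ 2 ≤ 43 / 50) :
    Real.exp (p * e + b * e ^ 2) ≤ 1 + p * e + (p ^ 2 + 18 / 5 * b) * e ^ 2 := by
  have pe_le : p * e ≤ 5 / 6 :=
    calc p * e ≤ |p| * |e| := (le_abs_self _).trans_eq (abs_mul _ _)
      _ ≤ |p| * R := by gcongr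
      _ ≤ 5 / 6 := hp
  have be_le : b * e ^ 2 ≤ 43 / 50 :=
    (mul_le_mul_of_nonneg_left (sq_le_sq' (neg_le_of_abs_le he) (le_of_abs_le he)) hb).trans hbR
  have cross_le : b * e ^ 2 * (2 * (p * e) + b * e ^ 2) ≤ b * e ^ 2 * (13 / 5) :=
    mul_le_mul_of_nonneg_left (by linarith) (by positivity)
  calc Real.exp (p * e + b * e ^ 2) ≤ 1 + (p * e + b * e ^ 2) + (p * e + b * e ^ 2) ^ 2 :=
        exp_le_one_add_add_sq (by linarith)
    _ ≤ 1 + p * e + (p ^ 2 + 18 / 5 * b) * e ^ 2 := by linarith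

theorem sqrt_le_sqrt_add_div {x y : ℝ} (hx : 0 < x) (hy : 0 ≤ y) :
    Real.sqrt y ≤ Real.sqrt x + (y - x) / (2 * Real.sqrt x) := by
  have := Real.sqrt_pos.2 hx
  rw [← sub_le_iff_le_add', le_div_iff₀ (by positivity)]
  nlinarith [sq_nonneg (Real.sqrt y - Real.sqrt x), Real.sq_sqrt hx.le, Real.sq_sqrt hy]

-- This fixes the constants of the argument: while `√Q` rises from `3/5 * b` to `b`, the potential
-- `√(Q + c²)` with `c = 3/10 * B`, tilted by `4 * L / B`, gains `L - log 2` on top of the price of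
-- the total leverage `V`.
theorem sub_log_two_add_le_tilt {L b B V : ℝ} (hL : 2 * Real.log 2 ≤ L) (hB : 0 < B)
    (hBb : B ≤ b) (hbB : 3 / 5 * b ≤ B) (hV : V * L ≤ b ^ 2 / 64) :
    L - Real.log 2 + ((4 * L / B) ^ 2 + 18 / 5 * (4 * L / B / (2 * (3 / 10 * B)))) * V ≤
      4 * L / B * (b - Real.sqrt ((3 / 5 * b) ^ 2 + (3 / 10 * B) ^ 2)) := by
  obtain ⟨x, rfl⟩ : ∃ x, b = x * B := ⟨b / B, by field_simp⟩
  have hx1 : 1 ≤ x := by nlinarith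
  have hx2 : x ≤ 5 / 3 := by nlinarith
  have hlog := Real.log_two_gt_d9
  have hlog' := Real.log_two_lt_d9
  have hL0 : 0 < L := by linarith
  -- the chord over `1 ≤ x ≤ 5/3` of the convex function `√(9x²/25 + 9/100)`
  have chord : Real.sqrt ((3 / 5 * (x * B)) ^ 2 + (3 / 10 * B) ^ 2) ≤ (0.111 + 0.56 * x) * B := by
    refine Real.sqrt_le_iff.2 ⟨by positivity, ?_⟩
    have : 9 / 25 * x ^ 2 + 9 / 100 ≤ (0.111 + 0.56 * x) ^ 2 := by nlinarith
    nlinarith [sq_nonneg B]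
  have variance_le : ((4 * L / B) ^ 2 + 18 / 5 * (4 * L / B / (2 * (3 / 10 * B)))) * V ≤
      x ^ 2 * (L / 4 + 3 / 8) :=
    calc _ = (16 * L + 24) / B ^ 2 * (V * L) := by field_simp; ring
      _ ≤ (16 * L + 24) / B ^ 2 * ((x * B) ^ 2 / 64) := by gcongr
      _ = x ^ 2 * (L / 4 + 3 / 8) := by field_simp; ring
  calc _ ≤ L - Real.log 2 + x ^ 2 * (L / 4 + 3 / 8) := by gcongr
    _ ≤ L * (1.76 * x - 0.444) := by
      have hx12 : 0 ≤ (x - 1) * (5 / 3 - x) := mul_nonneg (by linarith) (by linarith)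
      have slope : 0 ≤ 1.76 * x - 1.444 - x ^ 2 / 4 := by nlinarith
      nlinarith [mul_nonneg slope (sub_nonneg.2 hL), mul_nonneg slope (sub_nonneg.2 hlog.le)]
    _ = 4 * L / B * (x * B - (0.111 + 0.56 * x) * B) := by field_simp; ring
    _ ≤ _ := by gcongr

/-- The deterministic hypotheses of the self-normalised Bernstein bound, for one trajectory. `Q` is
the energy of the normalised noise sum, driven by the noise `e` through a linear coefficient `u` and
a quadratic coefficient `h * v`; `β` is the claimed radius of `√Q`, and `L` the logarithmic
confidence level. For weighted least squares `h i` is the weight of round `i + 1`, `v i` its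
normalised leverage, and round `i + 1` turns `Q i` into `Q (i + 1)`. -/
structure BernsteinRecursion (R : ℝ) (L β h v u Q e : ℕ → ℝ) : Prop where
  energy_zero : Q 0 = 0
  energy_nonneg : ∀ i, 0 ≤ Q i
  energy_succ_le : ∀ i, Q (i + 1) ≤ Q i + (2 * e i * u i + e i ^ 2 * (h i * v i))
  weight_pos : ∀ i, 0 < h i
  leverage_nonneg : ∀ i, 0 ≤ v i
  leverage_le_one : ∀ i, v i ≤ 1
  sq_drift_le : ∀ i, u i ^ 2 ≤ h i * (v i * (1 - v i)) * Q i
  radius_zero : β 0 = 0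
  radius_pos : ∀ i, 0 < β (i + 1)
  radius_mono : Monotone β
  level_mono : Monotone L
  two_log_two_le_level : ∀ i, 2 * Real.log 2 ≤ L (i + 1)
  weight_le : ∀ i, R ^ 2 * h i * L (i + 1) ^ 2 ≤ β (i + 1) ^ 2 / 16
  sum_leverage_le : ∀ t, (∑ i ∈ range t, v i) * L t ≤ β t ^ 2 / 64

namespace BernsteinRecursion

/-- The tilt of the exponential supermartingale started at step `j`. -/
noncomputable def tilt (L β : ℕ → ℝ) (j : ℕ) : ℝ := 4 * L (j + 1) / β (j + 1)

/-- The regularisation `c` of the potential `√(Q + c ^ 2)` used from step `j` on. -/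
noncomputable def smoothing (β : ℕ → ℝ) (j : ℕ) : ℝ := 3 / 10 * β (j + 1)

/-- The price per unit of leverage of the exponential supermartingale started at step `j`. -/
noncomputable def rate (L β : ℕ → ℝ) (j : ℕ) : ℝ :=
  tilt L β j ^ 2 + 18 / 5 * (tilt L β j / (2 * smoothing β j))

/-- The supermartingale started at step `j` still moves at step `i`: the radius has not outgrown
`β (j + 1)` by more than a factor `5 / 3`, and the energy has not yet left the confidence region. -/
def Active (β Q : ℕ → ℝ) (j i : ℕ) : Prop :=
  j ≤ i ∧ 3 / 5 * β (i + 1) ≤ β (j + 1) ∧ ∀ k ≤ i, Q k ≤ β k ^ 2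

open Classical in
/-- The coefficient of `e i` in the one-step bound of the exponentiated potential. -/
noncomputable def linCoeff (L β u Q : ℕ → ℝ) (j i : ℕ) : ℝ :=
  if Active β Q j i then tilt L β j * (u i / Real.sqrt (Q i + smoothing β j ^ 2)) else 0

open Classical in
/-- The coefficient of `e i ^ 2` in the one-step bound of the exponentiated potential. -/
noncomputable def quadCoeff (L β h v Q : ℕ → ℝ) (j i : ℕ) : ℝ :=
  if Active β Q j i then rate L β j * (h i * v i) else 0

/-- The factor contributed by step `i` to the exponential supermartingale started at step `j`; it is
compensated for noise of conditional variance at most `(h i)⁻¹`. -/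
noncomputable def factor (L β h v u Q e : ℕ → ℝ) (j i : ℕ) : ℝ :=
  (1 + linCoeff L β u Q j i * e i + quadCoeff L β h v Q j i * e i ^ 2) *
    Real.exp (-(quadCoeff L β h v Q j i * (h i)⁻¹))

variable {R : ℝ} {L β h v u Q e : ℕ → ℝ} {i j t T : ℕ}

theorem factor_eq_one_of_not_active (hact : ¬Active β Q j i) : factor L β h v u Q e j i = 1 := by
  simp [factor, linCoeff, quadCoeff, hact]

theorem level_pos (S : BernsteinRecursion R L β h v u Q e) (j : ℕ) : 0 < L (j + 1) := by
  linarith [S.two_log_two_le_level j, Real.log_two_gt_d9]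

theorem tilt_pos (S : BernsteinRecursion R L β h v u Q e) (j : ℕ) : 0 < tilt L β j :=
  div_pos (mul_pos four_pos (S.level_pos j)) (S.radius_pos j)

theorem smoothing_pos (S : BernsteinRecursion R L β h v u Q e) (j : ℕ) : 0 < smoothing β j :=
  mul_pos (by norm_num) (S.radius_pos j)

theorem rate_nonneg (S : BernsteinRecursion R L β h v u Q e) (j : ℕ) : 0 ≤ rate L β j := by
  have := S.tilt_pos j
  have := S.smoothing_pos j
  unfold rate
  positivity

theorem quadCoeff_nonneg (S : BernsteinRecursion R L β h v u Q e) (j i : ℕ) :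
    0 ≤ quadCoeff L β h v Q j i := by
  unfold quadCoeff
  split_ifs
  · exact mul_nonneg (S.rate_nonneg j) (mul_nonneg (S.weight_pos i).le (S.leverage_nonneg i))
  · exact le_rfl

theorem weight_mul_level_sq_le (S : BernsteinRecursion R L β h v u Q e) (hact : Active β Q j i) :
    R ^ 2 * h i * L (j + 1) ^ 2 ≤ 25 / 144 * β (j + 1) ^ 2 := by
  have hLL : L (j + 1) ≤ L (i + 1) := S.level_mono (by linarith [hact.1])
  have := S.weight_pos i
  have := S.level_pos j
  have := S.radius_pos i
  calc R ^ 2 * h i * L (j + 1) ^ 2 ≤ R ^ 2 * h i * L (i + 1) ^ 2 := by gcongr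
    _ ≤ β (i + 1) ^ 2 / 16 := S.weight_le i
    _ = 25 / 144 * (3 / 5 * β (i + 1)) ^ 2 := by ring
    _ ≤ 25 / 144 * β (j + 1) ^ 2 := by gcongr; exact hact.2.1

theorem tilt_sq_mul_le (S : BernsteinRecursion R L β h v u Q e) (hact : Active β Q j i) :
    tilt L β j ^ 2 * (R ^ 2 * h i) ≤ 25 / 9 := by
  have hβ := S.radius_pos j
  rw [tilt, div_pow, div_mul_eq_mul_div, div_le_iff₀ (by positivity)]
  linarith [S.weight_mul_level_sq_le hact]

theorem tilt_div_smoothing_mul_le (S : BernsteinRecursion R L β h v u Q e)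
    (hact : Active β Q j i) :
    tilt L β j / (2 * smoothing β j) * (R ^ 2 * h i) ≤ 43 / 50 := by
  have hβ := S.radius_pos j
  have hL := S.level_pos j
  calc tilt L β j / (2 * smoothing β j) * (R ^ 2 * h i)
      = 20 / 3 * (R ^ 2 * h i * L (j + 1) ^ 2) / (L (j + 1) * β (j + 1) ^ 2) := by
        unfold tilt smoothing; field_simp; ring
    _ ≤ 20 / 3 * (25 / 144 * β (j + 1) ^ 2) / (L (j + 1) * β (j + 1) ^ 2) := by
        gcongr ?_ / _; linarith [S.weight_mul_level_sq_le hact]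
    _ = 125 / 108 / L (j + 1) := by field_simp; ring
    _ ≤ 43 / 50 := by
        rw [div_le_iff₀ hL]
        linarith [S.two_log_two_le_level j, Real.log_two_gt_d9]

theorem sq_linCoeff_le (S : BernsteinRecursion R L β h v u Q e) (j i : ℕ) :
    linCoeff L β u Q j i ^ 2 ≤ tilt L β j ^ 2 * (h i * (v i * (1 - v i))) := by
  have hv : 0 ≤ h i * (v i * (1 - v i)) := mul_nonneg (S.weight_pos i).le
    (mul_nonneg (S.leverage_nonneg i) (sub_nonneg.2 (S.leverage_le_one i)))
  have hc := sq_pos_of_pos (S.smoothing_pos j)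
  have hX : 0 < Q i + smoothing β j ^ 2 := add_pos_of_nonneg_of_pos (S.energy_nonneg i) hc
  unfold linCoeff
  split_ifs
  · rw [mul_pow, div_pow, Real.sq_sqrt hX.le]
    gcongr
    rw [div_le_iff₀ hX]
    exact (S.sq_drift_le i).trans (by gcongr; linarith)
  · simpa using mul_nonneg (sq_nonneg _) hv

theorem abs_linCoeff_mul_le (S : BernsteinRecursion R L β h v u Q e) (hR : 0 < R) (j i : ℕ) :
    |linCoeff L β u Q j i| * R ≤ 5 / 6 := by
  by_cases hact : Active β Q j i
  · have hv : v i * (1 - v i) ≤ 1 / 4 := by nlinarith [sq_nonneg (v i - 1 / 2)]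
    have hh := S.weight_pos i
    refine le_of_abs_le (abs_le_of_sq_le_sq ?_ (by norm_num))
    calc (|linCoeff L β u Q j i| * R) ^ 2 = linCoeff L β u Q j i ^ 2 * R ^ 2 := by
          rw [mul_pow, sq_abs]
      _ ≤ tilt L β j ^ 2 * (h i * (1 / 4)) * R ^ 2 := by
          gcongr; exact (S.sq_linCoeff_le j i).trans (by gcongr)
      _ = tilt L β j ^ 2 * (R ^ 2 * h i) / 4 := by ring
      _ ≤ (5 / 6) ^ 2 := by linarith [S.tilt_sq_mul_le hact]
  · simp only [linCoeff, hact, if_false, abs_zero, zero_mul]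
    norm_num

theorem quadCoeff_mul_le (S : BernsteinRecursion R L β h v u Q e) (j i : ℕ) :
    quadCoeff L β h v Q j i * R ^ 2 ≤ 6 := by
  unfold quadCoeff
  split_ifs with hact
  · have hh := S.weight_pos i
    have hρ := S.rate_nonneg j
    calc rate L β j * (h i * v i) * R ^ 2 ≤ rate L β j * (h i * 1) * R ^ 2 := by
          gcongr; exact S.leverage_le_one i
      _ = tilt L β j ^ 2 * (R ^ 2 * h i) +
          18 / 5 * (tilt L β j / (2 * smoothing β j) * (R ^ 2 * h i)) := by unfold rate; ring
      _ ≤ 6 := by linarith [S.tilt_sq_mul_le hact, S.tilt_div_smoothing_mul_le hact]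
  · norm_num

theorem tilt_mul_sqrt_sub_le (S : BernsteinRecursion R L β h v u Q e)
    (hact : Active β Q j i) :
    tilt L β j * (Real.sqrt (Q (i + 1) + smoothing β j ^ 2) -
      Real.sqrt (Q i + smoothing β j ^ 2)) ≤
      linCoeff L β u Q j i * e i + tilt L β j / (2 * smoothing β j) * (h i * v i) * e i ^ 2 := by
  rw [linCoeff, if_pos hact]
  have hθ := S.tilt_pos j
  have hc := S.smoothing_pos j
  have hhv : 0 ≤ h i * v i := mul_nonneg (S.weight_pos i).le (S.leverage_nonneg i)
  set c := smoothing β j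
  set θ := tilt L β j
  have hX : 0 < Q i + c ^ 2 := add_pos_of_nonneg_of_pos (S.energy_nonneg i) (by positivity)
  have hY : 0 ≤ Q (i + 1) + c ^ 2 := add_nonneg (S.energy_nonneg _) (by positivity)
  have := Real.sqrt_pos.2 hX
  have c_le : c ≤ Real.sqrt (Q i + c ^ 2) := Real.le_sqrt_of_sq_le (by linarith [S.energy_nonneg i])
  calc _ ≤ θ * ((2 * e i * u i + e i ^ 2 * (h i * v i)) / (2 * Real.sqrt (Q i + c ^ 2))) := by
        gcongr
        refine (sub_le_iff_le_add'.2 (sqrt_le_sqrt_add_div hX hY)).trans ?_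
        gcongr
        linarith [S.energy_succ_le i]
    _ = θ * (u i / Real.sqrt (Q i + c ^ 2)) * e i +
        θ / (2 * Real.sqrt (Q i + c ^ 2)) * (h i * v i) * e i ^ 2 := by field_simp
    _ ≤ _ := by gcongr

theorem sq_linCoeff_add_le_quadCoeff (S : BernsteinRecursion R L β h v u Q e)
    (hact : Active β Q j i) :
    linCoeff L β u Q j i ^ 2 + 18 / 5 * (tilt L β j / (2 * smoothing β j) * (h i * v i)) ≤
      quadCoeff L β h v Q j i := by
  have hh := S.weight_pos i
  have : linCoeff L β u Q j i ^ 2 ≤ tilt L β j ^ 2 * (h i * v i) :=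
    (S.sq_linCoeff_le j i).trans (by gcongr; nlinarith [S.leverage_nonneg i])
  rw [quadCoeff, if_pos hact, rate]
  linarith

theorem exp_tilt_mul_sqrt_sub_le (S : BernsteinRecursion R L β h v u Q e) (hR : 0 < R)
    (he : |e i| ≤ R) (hact : Active β Q j i) :
    Real.exp (tilt L β j * (Real.sqrt (Q (i + 1) + smoothing β j ^ 2) -
      Real.sqrt (Q i + smoothing β j ^ 2))) ≤
      1 + linCoeff L β u Q j i * e i + quadCoeff L β h v Q j i * e i ^ 2 := by
  have hc := S.smoothing_pos j
  have hθ := S.tilt_pos j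
  have hh := S.weight_pos i
  have hv := S.leverage_nonneg i
  have curvature_le : tilt L β j / (2 * smoothing β j) * (h i * v i) * R ^ 2 ≤ 43 / 50 :=
    calc _ = tilt L β j / (2 * smoothing β j) * (R ^ 2 * (h i * v i)) := by ring
      _ ≤ tilt L β j / (2 * smoothing β j) * (R ^ 2 * h i) := by
          gcongr; exact mul_le_of_le_one_right hh.le (S.leverage_le_one i)
      _ ≤ 43 / 50 := S.tilt_div_smoothing_mul_le hact
  refine (Real.exp_le_exp.2 (S.tilt_mul_sqrt_sub_le hact)).trans ?_
  refine (exp_add_mul_sq_le (by positivity) he (S.abs_linCoeff_mul_le hR j i) curvature_le).trans ?_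
  gcongr
  exact S.sq_linCoeff_add_le_quadCoeff hact

theorem exp_le_factor (S : BernsteinRecursion R L β h v u Q e) (hR : 0 < R)
    (he : |e i| ≤ R) (hact : Active β Q j i) :
    Real.exp (tilt L β j * (Real.sqrt (Q (i + 1) + smoothing β j ^ 2) -
      Real.sqrt (Q i + smoothing β j ^ 2)) - rate L β j * v i) ≤ factor L β h v u Q e j i := by
  have hq : quadCoeff L β h v Q j i * (h i)⁻¹ = rate L β j * v i := by
    have := (S.weight_pos i).ne'
    rw [quadCoeff, if_pos hact]
    field_simp
  rw [factor, hq, sub_eq_add_neg, Real.exp_add]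
  gcongr
  exact S.exp_tilt_mul_sqrt_sub_le hR he hact

theorem linear_add_quadratic_nonneg (S : BernsteinRecursion R L β h v u Q e) (hR : 0 < R)
    (he : |e i| ≤ R) (j : ℕ) :
    0 ≤ 1 + linCoeff L β u Q j i * e i + quadCoeff L β h v Q j i * e i ^ 2 := by
  have : |linCoeff L β u Q j i * e i| ≤ 5 / 6 := by
    rw [abs_mul]
    exact (by gcongr : _ ≤ |linCoeff L β u Q j i| * R).trans (S.abs_linCoeff_mul_le hR j i)
  have := mul_nonneg (S.quadCoeff_nonneg j i) (sq_nonneg (e i))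
  linarith [neg_le_of_abs_le ‹|_| ≤ _›]

theorem factor_nonneg (S : BernsteinRecursion R L β h v u Q e) (hR : 0 < R) (he : |e i| ≤ R)
    (j : ℕ) : 0 ≤ factor L β h v u Q e j i :=
  mul_nonneg (S.linear_add_quadratic_nonneg hR he j) (Real.exp_pos _).le

theorem factor_le (S : BernsteinRecursion R L β h v u Q e) (hR : 0 < R) (he : |e i| ≤ R)
    (j : ℕ) : factor L β h v u Q e j i ≤ 8 := by
  have hq := S.quadCoeff_nonneg j i
  have hh := S.weight_pos i
  have lin_le : linCoeff L β u Q j i * e i ≤ |linCoeff L β u Q j i| * R :=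
    (le_abs_self _).trans (by rw [abs_mul]; gcongr)
  have quad_le : quadCoeff L β h v Q j i * e i ^ 2 ≤ quadCoeff L β h v Q j i * R ^ 2 := by
    gcongr quadCoeff L β h v Q j i * ?_
    exact sq_le_sq' (neg_le_of_abs_le he) (le_of_abs_le he)
  have exp_le : Real.exp (-(quadCoeff L β h v Q j i * (h i)⁻¹)) ≤ 1 :=
    Real.exp_le_one_iff.2 (neg_nonpos.2 (by positivity))
  refine (mul_le_of_le_one_right (S.linear_add_quadratic_nonneg hR he j) exp_le).trans ?_
  linarith [S.abs_linCoeff_mul_le hR j i, S.quadCoeff_mul_le j i]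

theorem exists_start (S : BernsteinRecursion R L β h v u Q e)
    (hin : ∀ k ≤ t, Q k ≤ β k ^ 2) :
    ∃ j ≤ t, 3 / 5 * β (t + 1) ≤ β (j + 1) ∧ Q j ≤ (3 / 5 * β (t + 1)) ^ 2 := by
  classical
  have hβ := S.radius_pos t
  have reached : ∃ k, 3 / 5 * β (t + 1) ≤ β k := ⟨t + 1, by linarith⟩
  obtain ⟨j, hj⟩ : ∃ j, Nat.find reached = j + 1 := by
    refine Nat.exists_eq_succ_of_ne_zero fun h0 => ?_
    have := Nat.find_spec reached
    rw [h0, S.radius_zero] at this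
    linarith
  have hjt : j ≤ t := by
    have := Nat.find_min' reached (by linarith : 3 / 5 * β (t + 1) ≤ β (t + 1))
    omega
  have before : β j ≤ 3 / 5 * β (t + 1) :=
    (not_le.1 (Nat.find_min reached (by omega : j < Nat.find reached))).le
  have hβj : 0 ≤ β j := S.radius_zero ▸ S.radius_mono (Nat.zero_le j)
  exact ⟨j, hjt, hj ▸ Nat.find_spec reached, (hin j hjt).trans (by gcongr)⟩

theorem prod_factor_eq_prod_Ico (hexit : β t ^ 2 < Q t) (htT : t ≤ T) :
    ∏ i ∈ range T, factor L β h v u Q e j i = ∏ i ∈ Ico j t, factor L β h v u Q e j i := by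
  refine (Finset.prod_subset (fun i hi => ?_) fun i _ hi => ?_).symm
  · exact mem_range.2 ((mem_Ico.1 hi).2.trans_le htT)
  · refine factor_eq_one_of_not_active fun hact => hi (mem_Ico.2 ⟨hact.1, ?_⟩)
    exact not_le.1 fun hti => hexit.not_ge (hact.2.2 t hti)

theorem level_sub_le_sum_Ico (S : BernsteinRecursion R L β h v u Q e)
    (hexit : β (t + 1) ^ 2 < Q (t + 1)) (hjt : j ≤ t) (hβj : 3 / 5 * β (t + 1) ≤ β (j + 1))
    (hQj : Q j ≤ (3 / 5 * β (t + 1)) ^ 2) :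
    L (j + 1) - Real.log 2 ≤ ∑ i ∈ Ico j (t + 1),
      (tilt L β j * (Real.sqrt (Q (i + 1) + smoothing β j ^ 2) -
        Real.sqrt (Q i + smoothing β j ^ 2)) - rate L β j * v i) := by
  set V := ∑ i ∈ range (t + 1), v i
  have hV : 0 ≤ V := Finset.sum_nonneg fun i _ => S.leverage_nonneg i
  have hρ := S.rate_nonneg j
  have hθ := S.tilt_pos j
  have hVL : V * L (j + 1) ≤ β (t + 1) ^ 2 / 64 :=
    (mul_le_mul_of_nonneg_left (S.level_mono (by omega)) hV).trans (S.sum_leverage_le (t + 1))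
  have exit_le : β (t + 1) ≤ Real.sqrt (Q (t + 1) + smoothing β j ^ 2) :=
    Real.le_sqrt_of_sq_le (hexit.le.trans (le_add_of_nonneg_right (sq_nonneg _)))
  have sum_leverage : ∑ i ∈ Ico j (t + 1), v i ≤ V :=
    Finset.sum_le_sum_of_subset_of_nonneg (fun i hi => mem_range.2 (mem_Ico.1 hi).2)
      fun i _ _ => S.leverage_nonneg i
  have rise : tilt L β j * (β (t + 1) - Real.sqrt ((3 / 5 * β (t + 1)) ^ 2 + smoothing β j ^ 2)) ≤
      tilt L β j * (Real.sqrt (Q (t + 1) + smoothing β j ^ 2) -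
        Real.sqrt (Q j + smoothing β j ^ 2)) := by gcongr
  have price : rate L β j * ∑ i ∈ Ico j (t + 1), v i ≤ rate L β j * V := by gcongr
  have budget : L (j + 1) - Real.log 2 + rate L β j * V ≤ _ :=
    sub_log_two_add_le_tilt (S.two_log_two_le_level j) (S.radius_pos j)
      (S.radius_mono (by omega)) hβj hVL
  rw [Finset.sum_sub_distrib, ← Finset.mul_sum, ← Finset.mul_sum,
    Finset.sum_Ico_sub (fun i => Real.sqrt (Q i + smoothing β j ^ 2)) (by omega : j ≤ t + 1)]
  exact le_sub_iff_add_le.2 (((add_le_add_right price _).trans budget).trans rise)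

theorem exp_level_sub_le_prod_Ico (S : BernsteinRecursion R L β h v u Q e) (hR : 0 < R)
    (he : ∀ i, |e i| ≤ R) (hexit : β (t + 1) ^ 2 < Q (t + 1)) (hin : ∀ k ≤ t, Q k ≤ β k ^ 2)
    (hjt : j ≤ t) (hβj : 3 / 5 * β (t + 1) ≤ β (j + 1)) (hQj : Q j ≤ (3 / 5 * β (t + 1)) ^ 2) :
    Real.exp (L (j + 1) - Real.log 2) ≤ ∏ i ∈ Ico j (t + 1), factor L β h v u Q e j i := by
  have active : ∀ i ∈ Ico j (t + 1), Active β Q j i := fun i hi => by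
    obtain ⟨hji, hit⟩ := mem_Ico.1 hi
    refine ⟨hji, le_trans ?_ hβj, fun k hk => hin k (by omega)⟩
    gcongr
    exact S.radius_mono (by omega)
  calc Real.exp (L (j + 1) - Real.log 2) ≤ _ :=
        Real.exp_le_exp.2 (S.level_sub_le_sum_Ico hexit hjt hβj hQj)
    _ ≤ _ := by
      rw [Real.exp_sum]
      exact Finset.prod_le_prod (fun i _ => (Real.exp_pos _).le)
        fun i hi => S.exp_le_factor hR (he i) (active i hi)

theorem exists_exp_le_prod_factor (S : BernsteinRecursion R L β h v u Q e) (hR : 0 < R)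
    (he : ∀ i, |e i| ≤ R) (hexit : ∃ t ≤ T, β t ^ 2 < Q t) :
    ∃ j < T, Real.exp (L (j + 1) - Real.log 2) ≤ ∏ i ∈ range T, factor L β h v u Q e j i := by
  classical
  obtain ⟨htT, hexit_t⟩ := Nat.find_spec hexit
  obtain ⟨t, ht⟩ : ∃ t, Nat.find hexit = t + 1 := by
    refine Nat.exists_eq_succ_of_ne_zero fun h0 => ?_
    rw [h0, S.energy_zero] at hexit_t
    exact hexit_t.not_ge (sq_nonneg _)
  rw [ht] at htT hexit_t
  have hin : ∀ k ≤ t, Q k ≤ β k ^ 2 := fun k hk => not_lt.1 fun hlt =>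
    Nat.find_min hexit (by omega : k < Nat.find hexit) ⟨by omega, hlt⟩
  obtain ⟨j, hjt, hβj, hQj⟩ := S.exists_start hin
  refine ⟨j, by omega, ?_⟩
  rw [prod_factor_eq_prod_Ico hexit_t htT]
  exact S.exp_level_sub_le_prod_Ico hR he hexit_t hin hjt hβj hQj

end BernsteinRecursion

section Supermartingale

variable {Ω : Type*} {m' m : MeasurableSpace Ω} {P : Measure Ω}

theorem condExp_add_mul_add_mul [IsFiniteMeasure P] (hm : m' ≤ m) {e₁ e₂ g₀ g₁ g₂ : Ω → ℝ}
    {C : ℝ} (he₁ : Integrable e₁ P) (he₂ : Integrable e₂ P) (hg₀ : Measurable[m'] g₀)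
    (hg₁ : Measurable[m'] g₁) (hg₂ : Measurable[m'] g₂) (hg₀C : ∀ ω, |g₀ ω| ≤ C)
    (hg₁C : ∀ ω, |g₁ ω| ≤ C) (hg₂C : ∀ ω, |g₂ ω| ≤ C) :
    P[g₀ + g₁ * e₁ + g₂ * e₂ | m'] =ᵐ[P] g₀ + g₁ * P[e₁ | m'] + g₂ * P[e₂ | m'] := by
  have hi₀ : Integrable g₀ P :=
    .of_bound (hg₀.mono hm le_rfl).aestronglyMeasurable C (.of_forall hg₀C)
  have hi₁ : Integrable (g₁ * e₁) P :=
    he₁.bdd_mul (hg₁.mono hm le_rfl).aestronglyMeasurable (.of_forall hg₁C)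
  have hi₂ : Integrable (g₂ * e₂) P :=
    he₂.bdd_mul (hg₂.mono hm le_rfl).aestronglyMeasurable (.of_forall hg₂C)
  have h₀ := condExp_of_stronglyMeasurable hm hg₀.stronglyMeasurable hi₀
  have h₁ := condExp_mul_of_stronglyMeasurable_left hg₁.stronglyMeasurable hi₁ he₁
  have h₂ := condExp_mul_of_stronglyMeasurable_left hg₂.stronglyMeasurable hi₂ he₂
  filter_upwards [condExp_add (hi₀.add hi₁) hi₂ m', condExp_add hi₀ hi₁ m', h₁, h₂]
    with ω hadd hadd' h₁ h₂
  rw [hadd, Pi.add_apply, hadd', Pi.add_apply, h₀, h₁, h₂, Pi.add_apply, Pi.add_apply]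

theorem condExp_mul_exp_neg_le_one [IsProbabilityMeasure P] (hm : m' ≤ m)
    {e p q τ : Ω → ℝ} {C : ℝ} (he : MemLp e 2 P)
    (hp : Measurable[m'] p) (hq : Measurable[m'] q) (hτ : Measurable[m'] τ)
    (hpC : ∀ ω, |p ω| ≤ C) (hq0 : ∀ ω, 0 ≤ q ω) (hqC : ∀ ω, q ω ≤ C) (hτ0 : ∀ ω, 0 ≤ τ ω)
    (hmean : P[e | m'] =ᵐ[P] 0) (hvar : P[fun ω => e ω ^ 2 | m'] ≤ᵐ[P] τ) :
    P[fun ω => (1 + p ω * e ω + q ω * e ω ^ 2) * Real.exp (-(q ω * τ ω)) | m'] ≤ᵐ[P] 1 := by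
  set g : Ω → ℝ := fun ω => Real.exp (-(q ω * τ ω)) with hg
  have hg_meas : Measurable[m'] g := Real.measurable_exp.comp (hq.mul hτ).neg
  have hg1 : ∀ ω, |g ω| ≤ 1 := fun ω => by
    rw [abs_of_pos (Real.exp_pos _)]
    exact Real.exp_le_one_iff.2 (neg_nonpos.2 (mul_nonneg (hq0 ω) (hτ0 ω)))
  have mul_bound : ∀ {f : Ω → ℝ}, (∀ ω, |f ω| ≤ C) → ∀ ω, |(g * f) ω| ≤ max 1 C := fun hf ω => by
    rw [Pi.mul_apply, abs_mul]
    exact (mul_le_of_le_one_left (abs_nonneg _) (hg1 ω)).trans ((hf ω).trans (le_max_right 1 C))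
  have expand : (fun ω => (1 + p ω * e ω + q ω * e ω ^ 2) * Real.exp (-(q ω * τ ω))) =
      g + (g * p) * e + (g * q) * fun ω => e ω ^ 2 := by
    funext ω; simp only [Pi.add_apply, Pi.mul_apply, hg]; ring
  rw [expand]
  filter_upwards [condExp_add_mul_add_mul hm (he.integrable one_le_two) he.integrable_sq hg_meas
    (hg_meas.mul hp) (hg_meas.mul hq) (fun ω => (hg1 ω).trans (le_max_left 1 C)) (mul_bound hpC)
    (mul_bound fun ω => (abs_of_nonneg (hq0 ω)).trans_le (hqC ω)), hmean, hvar] with ω h h₁ h₂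
  rw [h]
  simp only [Pi.add_apply, Pi.mul_apply, Pi.one_apply, h₁, Pi.zero_apply, mul_zero, add_zero]
  calc g ω + g ω * q ω * (P[fun ω => e ω ^ 2 | m']) ω ≤ g ω + g ω * q ω * τ ω := by
        gcongr
        exact mul_nonneg (Real.exp_pos _).le (hq0 ω)
    _ = g ω * (q ω * τ ω + 1) := by ring
    _ ≤ g ω * Real.exp (q ω * τ ω) := by
        gcongr
        exact Real.add_one_le_exp _
    _ = 1 := by rw [hg, ← Real.exp_add, neg_add_cancel, Real.exp_zero]

theorem supermartingale_prod [IsFiniteMeasure P] {𝓕 : Filtration ℕ m} {Y : ℕ → Ω → ℝ} {K : ℝ}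
    (hY : ∀ i, Measurable[𝓕 (i + 1)] (Y i)) (hY0 : ∀ i, 0 ≤ᵐ[P] Y i)
    (hYK : ∀ i, ∀ᵐ ω ∂P, Y i ω ≤ K) (hcond : ∀ i, P[Y i | 𝓕 i] ≤ᵐ[P] 1) :
    Supermartingale (fun n => ∏ i ∈ range n, Y i) 𝓕 P := by
  have hprod_meas : ∀ n, Measurable[𝓕 n] (∏ i ∈ range n, Y i) := fun n => by
    rw [Finset.prod_fn]
    exact Finset.measurable_prod _ fun i hi => (hY i).mono (𝓕.mono (mem_range.1 hi)) le_rfl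
  have hprod_nonneg : ∀ n, 0 ≤ᵐ[P] ∏ i ∈ range n, Y i := fun n => by
    filter_upwards [ae_all_iff.2 hY0] with ω hω
    simpa only [Pi.zero_apply, Finset.prod_apply] using Finset.prod_nonneg fun i _ => hω i
  have hprod_le : ∀ n, ∀ᵐ ω ∂P, ‖(∏ i ∈ range n, Y i) ω‖ ≤ K ^ n := fun n => by
    filter_upwards [ae_all_iff.2 hY0, ae_all_iff.2 hYK] with ω h0 hK
    rw [Finset.prod_apply, Real.norm_of_nonneg (Finset.prod_nonneg fun i _ => h0 i)]
    exact (Finset.prod_le_prod (fun i _ => h0 i) fun i _ => hK i).trans_eq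
      (by rw [prod_const, card_range])
  have hprod_int : ∀ n, Integrable (∏ i ∈ range n, Y i) P := fun n =>
    .of_bound ((hprod_meas n).mono (𝓕.le n) le_rfl).aestronglyMeasurable _ (hprod_le n)
  have hY_int : ∀ i, Integrable (Y i) P := fun i =>
    .of_bound ((hY i).mono (𝓕.le _) le_rfl).aestronglyMeasurable K <| by
      filter_upwards [hY0 i, hYK i] with ω h0 hK
      rwa [Real.norm_of_nonneg h0]
  refine supermartingale_nat (fun n => (hprod_meas n).stronglyMeasurable) hprod_int fun n => ?_
  have hsucc := Finset.prod_range_succ Y n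
  filter_upwards [condExp_mul_of_stronglyMeasurable_left (hprod_meas n).stronglyMeasurable
    (hsucc ▸ hprod_int (n + 1)) (hY_int n), hcond n, hprod_nonneg n] with ω hpull hle h0
  rw [hsucc, hpull]
  exact mul_le_of_le_one_right h0 hle

theorem measure_exp_le_prod_le [IsProbabilityMeasure P] {𝓕 : Filtration ℕ m} {Y : ℕ → Ω → ℝ}
    {K : ℝ} (hY : ∀ i, Measurable[𝓕 (i + 1)] (Y i)) (hY0 : ∀ i, 0 ≤ᵐ[P] Y i)
    (hYK : ∀ i, ∀ᵐ ω ∂P, Y i ω ≤ K) (hcond : ∀ i, P[Y i | 𝓕 i] ≤ᵐ[P] 1) (n : ℕ) (l : ℝ) :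
    P {ω | Real.exp l ≤ ∏ i ∈ range n, Y i ω} ≤ ENNReal.ofReal (Real.exp (-l)) := by
  have hsuper := supermartingale_prod hY hY0 hYK hcond
  have hmean : ∫ ω, ∏ i ∈ range n, Y i ω ∂P ≤ 1 := by
    simpa [Finset.prod_apply] using hsuper.setIntegral_le (Nat.zero_le n) MeasurableSet.univ
  have hnonneg : 0 ≤ᵐ[P] fun ω => ∏ i ∈ range n, Y i ω := by
    filter_upwards [ae_all_iff.2 hY0] with ω hω using Finset.prod_nonneg fun i _ => hω i
  have markov := mul_meas_ge_le_integral_of_nonneg hnonneg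
    (by simpa [Finset.prod_fn] using hsuper.integrable n) (Real.exp l)
  rw [← ofReal_measureReal, Real.exp_neg, ← one_div]
  refine ENNReal.ofReal_le_ofReal ((le_div_iff₀' (Real.exp_pos l)).2 (markov.trans hmean))

end Supermartingale

namespace BernsteinRecursion

variable {Ω : Type*} {m : MeasurableSpace Ω} {P : Measure Ω} {𝓕 : Filtration ℕ m} {R : ℝ}
  {L : ℕ → ℝ} {β h v u Q : Ω → ℕ → ℝ} {ε : ℕ → Ω → ℝ} {j i : ℕ}

theorem measurableSet_active (hβ : ∀ i, Measurable[𝓕 (i - 1)] fun ω => β ω i)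
    (hQ : ∀ i, Measurable[𝓕 i] fun ω => Q ω i) (j i : ℕ) :
    MeasurableSet[𝓕 i] {ω | Active (β ω) (Q ω) j i} := by
  by_cases hji : j ≤ i
  · have hβ' : ∀ k ≤ i + 1, Measurable[𝓕 i] fun ω => β ω k := fun k hk =>
      (hβ k).mono (𝓕.mono (by omega)) le_rfl
    have hregion : MeasurableSet[𝓕 i] {ω | ∀ k ≤ i, Q ω k ≤ β ω k ^ 2} := by
      simp only [Set.ofPred_forall]
      exact MeasurableSet.iInter fun k => MeasurableSet.iInter fun hk =>
        measurableSet_le ((hQ k).mono (𝓕.mono hk) le_rfl) ((hβ' k (by omega)).pow_const 2)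
    simp only [Active, hji, true_and]
    exact (measurableSet_le ((hβ' (i + 1) le_rfl).const_mul _)
      (hβ' (j + 1) (by omega))).inter hregion
  · simp [Active, hji]

theorem measurable_linCoeff (hβ : ∀ i, Measurable[𝓕 (i - 1)] fun ω => β ω i)
    (hu : ∀ i, Measurable[𝓕 i] fun ω => u ω i) (hQ : ∀ i, Measurable[𝓕 i] fun ω => Q ω i)
    (j i : ℕ) : Measurable[𝓕 i] fun ω => linCoeff L (β ω) (u ω) (Q ω) j i := by
  by_cases hji : j ≤ i
  · have hβj : Measurable[𝓕 i] fun ω => β ω (j + 1) := (hβ (j + 1)).mono (𝓕.mono hji) le_rfl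
    refine Measurable.ite (measurableSet_active hβ hQ j i) ?_ measurable_const
    exact (hβj.const_div _).mul
      ((hu i).div (((hQ i).add ((hβj.const_mul _).pow_const 2)).sqrt))
  · simp [linCoeff, Active, hji]

theorem measurable_quadCoeff (hβ : ∀ i, Measurable[𝓕 (i - 1)] fun ω => β ω i)
    (hh : ∀ i, Measurable[𝓕 i] fun ω => h ω i) (hv : ∀ i, Measurable[𝓕 i] fun ω => v ω i)
    (hQ : ∀ i, Measurable[𝓕 i] fun ω => Q ω i) (j i : ℕ) :
    Measurable[𝓕 i] fun ω => quadCoeff L (β ω) (h ω) (v ω) (Q ω) j i := by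
  by_cases hji : j ≤ i
  · have hβj : Measurable[𝓕 i] fun ω => β ω (j + 1) := (hβ (j + 1)).mono (𝓕.mono hji) le_rfl
    refine Measurable.ite (measurableSet_active hβ hQ j i) ?_ measurable_const
    have hθ : Measurable[𝓕 i] fun ω => tilt L (β ω) j := hβj.const_div _
    have hc : Measurable[𝓕 i] fun ω => smoothing (β ω) j := hβj.const_mul _
    exact ((hθ.pow_const 2).add ((hθ.div (hc.const_mul 2)).const_mul _)).mul ((hh i).mul (hv i))
  · simp [quadCoeff, Active, hji]

section Probability

variable [IsProbabilityMeasure P]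
  (S : ∀ ω, BernsteinRecursion R L (β ω) (h ω) (v ω) (u ω) (Q ω) (fun i => ε i ω)) (hR : 0 < R)
  (hβ : ∀ i, Measurable[𝓕 (i - 1)] fun ω => β ω i) (hh : ∀ i, Measurable[𝓕 i] fun ω => h ω i)
  (hv : ∀ i, Measurable[𝓕 i] fun ω => v ω i) (hu : ∀ i, Measurable[𝓕 i] fun ω => u ω i)
  (hQ : ∀ i, Measurable[𝓕 i] fun ω => Q ω i)
  (hε : ∀ i, Measurable[𝓕 (i + 1)] (ε i)) (hbdd : ∀ i, ∀ᵐ ω ∂P, |ε i ω| ≤ R)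
  (hmean : ∀ i, P[ε i | 𝓕 i] =ᵐ[P] 0)
  (hvar : ∀ i, P[fun ω => ε i ω ^ 2 | 𝓕 i] ≤ᵐ[P] fun ω => (h ω i)⁻¹)
include S hR hβ hh hv hu hQ hε hbdd hmean hvar

theorem measure_exp_le_prod_factor_le (j T : ℕ) (l : ℝ) :
    P {ω | Real.exp l ≤ ∏ i ∈ range T,
      factor L (β ω) (h ω) (v ω) (u ω) (Q ω) (fun i => ε i ω) j i} ≤
      ENNReal.ofReal (Real.exp (-l)) := by
  have hp := fun i => measurable_linCoeff (L := L) hβ hu hQ j i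
  have hq := fun i => measurable_quadCoeff (L := L) hβ hh hv hQ j i
  have hmemLp : ∀ i, MemLp (ε i) 2 P := fun i =>
    .of_bound ((hε i).mono (𝓕.le _) le_rfl).aestronglyMeasurable R (hbdd i)
  set C := max (5 / 6 / R) (6 / R ^ 2)
  refine measure_exp_le_prod_le (𝓕 := 𝓕) (K := 8) (fun i => ?_) (fun i => ?_) (fun i => ?_)
    (fun i => ?_) T l
  · have hi : 𝓕 i ≤ 𝓕 (i + 1) := 𝓕.mono (Nat.le_succ i)
    refine ((((hp i).mono hi le_rfl).mul (hε i)).const_add 1 |>.add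
      (((hq i).mono hi le_rfl).mul ((hε i).pow_const 2))).mul ?_
    exact Real.measurable_exp.comp (((hq i).mul (hh i).inv).neg.mono hi le_rfl)
  · filter_upwards [hbdd i] with ω hω using (S ω).factor_nonneg hR hω j
  · filter_upwards [hbdd i] with ω hω using (S ω).factor_le hR hω j
  · refine condExp_mul_exp_neg_le_one (C := C) (𝓕.le i) (hmemLp i) (hp i) (hq i) (hh i).inv
      (fun ω => le_max_of_le_left ?_) (fun ω => (S ω).quadCoeff_nonneg j i)
      (fun ω => le_max_of_le_right ?_) (fun ω => (inv_pos.2 ((S ω).weight_pos i)).le)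
      (hmean i) (hvar i)
    · exact (le_div_iff₀ hR).2 ((S ω).abs_linCoeff_mul_le hR j i)
    · exact (le_div_iff₀ (by positivity)).2 ((S ω).quadCoeff_mul_le j i)

theorem measure_exists_sq_lt_energy_le (T : ℕ) :
    P {ω | ∃ t ≤ T, β ω t ^ 2 < Q ω t} ≤
      ENNReal.ofReal (∑ j ∈ range T, 2 * Real.exp (-L (j + 1))) := by
  set W : ℕ → Ω → ℝ := fun j ω => ∏ i ∈ range T,
    factor L (β ω) (h ω) (v ω) (u ω) (Q ω) (fun i => ε i ω) j i
  have hsub : {ω | ∃ t ≤ T, β ω t ^ 2 < Q ω t} ≤ᵐ[P]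
      ⋃ j ∈ range T, {ω | Real.exp (L (j + 1) - Real.log 2) ≤ W j ω} := by
    filter_upwards [ae_all_iff.2 hbdd] with ω hω hexit
    obtain ⟨j, hj, hle⟩ := (S ω).exists_exp_le_prod_factor hR hω hexit
    exact Set.mem_biUnion (mem_coe.2 (mem_range.2 hj)) hle
  calc P _ ≤ ∑ j ∈ range T, P {ω | Real.exp (L (j + 1) - Real.log 2) ≤ W j ω} :=
        (measure_mono_ae hsub).trans (measure_biUnion_finset_le _ _)
    _ ≤ ∑ j ∈ range T, ENNReal.ofReal (2 * Real.exp (-L (j + 1))) := by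
        gcongr with j
        refine (measure_exp_le_prod_factor_le S hR hβ hh hv hu hQ hε hbdd hmean hvar j T
          _).trans_eq ?_
        rw [neg_sub, sub_eq_add_neg, Real.exp_add, Real.exp_log two_pos]
    _ = _ := (ENNReal.ofReal_sum_of_nonneg fun j _ => by positivity).symm

end Probability

end BernsteinRecursion

section QuadraticForm

variable {n : Type*} [Fintype n] {M : Matrix n n ℝ}

theorem isHermitian_dotProduct_mulVec_comm (hM : M.IsHermitian) (x y : n → ℝ) :
    x ⬝ᵥ (M *ᵥ y) = y ⬝ᵥ (M *ᵥ x) := by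
  have hT : Mᵀ = M := by rw [← conjTranspose_eq_transpose_of_trivial, hM.eq]
  rw [dotProduct_mulVec, ← mulVec_transpose, hT, dotProduct_comm]

theorem posSemidef_dotProduct_mulVec_self_nonneg (hM : M.PosSemidef) (x : n → ℝ) :
    0 ≤ x ⬝ᵥ (M *ᵥ x) := by
  simpa only [star_trivial] using hM.dotProduct_mulVec_nonneg x

theorem posSemidef_sq_dotProduct_mulVec_le (hM : M.PosSemidef) (x y : n → ℝ) :
    (x ⬝ᵥ (M *ᵥ y)) ^ 2 ≤ (x ⬝ᵥ (M *ᵥ x)) * (y ⬝ᵥ (M *ᵥ y)) := by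
  classical
  have hnonneg : ∀ z, 0 ≤ toBilin' M z z := fun z => by
    simpa only [toBilin'_apply'] using posSemidef_dotProduct_mulVec_self_nonneg hM z
  calc (x ⬝ᵥ (M *ᵥ y)) ^ 2 = (x ⬝ᵥ (M *ᵥ y)) * (y ⬝ᵥ (M *ᵥ x)) := by
        rw [sq, isHermitian_dotProduct_mulVec_comm hM.isHermitian y x]
    _ ≤ _ := by
        simpa only [toBilin'_apply'] using
          LinearMap.BilinForm.apply_mul_apply_le_of_forall_zero_le (toBilin' M) hnonneg x y

theorem sq_dotProduct_le_mul (x y : n → ℝ) : (x ⬝ᵥ y) ^ 2 ≤ (x ⬝ᵥ x) * (y ⬝ᵥ y) := by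
  simpa only [dotProduct, ← sq] using sum_mul_sq_le_sq_mul_sq univ x y

theorem posSemidef_det_le_trace_div_card_pow [DecidableEq n] [Nonempty n] (hM : M.PosSemidef) :
    M.det ≤ (M.trace / Fintype.card n) ^ Fintype.card n := by
  have hH := hM.isHermitian
  have hcard : (0 : ℝ) < Fintype.card n := by exact_mod_cast Fintype.card_pos
  have hnonneg : ∀ i ∈ univ, 0 ≤ hH.eigenvalues i := fun i _ => hM.eigenvalues_nonneg i
  have hprod : 0 ≤ ∏ i, hH.eigenvalues i := prod_nonneg hnonneg
  have amgm := Real.geom_mean_le_arith_mean univ (fun _ => 1) hH.eigenvalues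
    (fun _ _ => zero_le_one) (by simpa using hcard) hnonneg
  simp only [Real.rpow_one, sum_const, card_univ, nsmul_eq_mul, mul_one, one_mul] at amgm
  have hdet := hH.det_eq_prod_eigenvalues
  have htrace := hH.trace_eq_sum_eigenvalues
  simp only [RCLike.ofReal_real_eq_id, id] at hdet htrace
  rw [hdet, htrace]
  calc ∏ i, hH.eigenvalues i
      = ((∏ i, hH.eigenvalues i) ^ (Fintype.card n : ℝ)⁻¹) ^ Fintype.card n := by
        rw [Real.rpow_inv_natCast_pow hprod Fintype.card_ne_zero]
    _ ≤ _ := pow_le_pow_left₀ (Real.rpow_nonneg hprod _) amgm _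

end QuadraticForm

section RankOneUpdate

variable {n 𝕜 : Type*} [Fintype n] [DecidableEq n] [Field 𝕜] {M : Matrix n n 𝕜}

theorem inv_add_smul_vecMulVec (hM : IsUnit M.det) {h : 𝕜} {x y : n → 𝕜}
    (hne : 1 + h * (y ⬝ᵥ (M⁻¹ *ᵥ x)) ≠ 0) :
    (M + h • vecMulVec x y)⁻¹ =
      M⁻¹ - (h / (1 + h * (y ⬝ᵥ (M⁻¹ *ᵥ x)))) • vecMulVec (M⁻¹ *ᵥ x) (y ᵥ* M⁻¹) := by
  apply inv_eq_right_inv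
  rw [mul_sub, add_mul, add_mul, mul_nonsing_inv _ hM, smul_mul, vecMulVec_mul, mul_smul_comm,
    mul_smul_comm, mul_vecMulVec, mulVec_mulVec, mul_nonsing_inv _ hM, one_mulVec, smul_mul,
    vecMulVec_mul_vecMulVec]
  ext i j
  simp only [Matrix.add_apply, Matrix.sub_apply, Matrix.smul_apply, vecMulVec_apply, Pi.smul_apply,
    smul_eq_mul]
  field_simp
  ring

theorem det_add_smul_vecMulVec (hM : IsUnit M.det) (h : 𝕜) (x y : n → 𝕜) :
    (M + h • vecMulVec x y).det = M.det * (1 + h * (y ⬝ᵥ (M⁻¹ *ᵥ x))) := by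
  rw [← smul_vecMulVec, vecMulVec_eq Unit, det_add_replicateCol_mul_replicateRow hM,
    det_unique (n := Unit), Matrix.add_apply, one_apply_eq, ← replicateRow_vecMul,
    replicateRow_mul_replicateCol_apply, dotProduct_smul, smul_eq_mul, dotProduct_mulVec]

end RankOneUpdate

theorem posDef_dotProduct_inv_rankOne_update_le {n : Type*} [Fintype n] [DecidableEq n]
    {M : Matrix n n ℝ} (hM : M.PosDef) {h : ℝ} (hh : 0 ≤ h) (c : ℝ) (s x : n → ℝ) :
    let α := h * (x ⬝ᵥ (M⁻¹ *ᵥ x))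
    (s + (h * c) • x) ⬝ᵥ ((M + h • vecMulVec x x)⁻¹ *ᵥ (s + (h * c) • x)) ≤
      s ⬝ᵥ (M⁻¹ *ᵥ s) +
        (2 * c * (h * (x ⬝ᵥ (M⁻¹ *ᵥ s)) / (1 + α)) + c ^ 2 * (h * (α / (1 + α)))) := by
  have hsymm := isHermitian_dotProduct_mulVec_comm hM.inv.isHermitian
  have hα : 0 ≤ x ⬝ᵥ (M⁻¹ *ᵥ x) := posSemidef_dotProduct_mulVec_self_nonneg hM.inv.posSemidef x
  have hvec : x ᵥ* M⁻¹ = M⁻¹ *ᵥ x := by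
    rw [← mulVec_transpose, ← conjTranspose_eq_transpose_of_trivial, hM.inv.isHermitian.eq]
  rw [inv_add_smul_vecMulVec hM.det_pos.ne'.isUnit (by positivity), hvec]
  simp only [sub_mulVec, smul_mulVec, vecMulVec_mulVec, mulVec_add, mulVec_smul, add_dotProduct,
    dotProduct_add, dotProduct_sub, smul_dotProduct, dotProduct_smul, smul_eq_mul,
    op_smul_eq_smul, hsymm s x, dotProduct_comm (M⁻¹ *ᵥ x)]
  generalize x ⬝ᵥ (M⁻¹ *ᵥ x) = α at *
  rw [← sub_nonneg]
  refine le_of_le_of_eq (show 0 ≤ h * (x ⬝ᵥ (M⁻¹ *ᵥ s)) ^ 2 / (1 + h * α) by positivity) ?_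
  have hne : 1 + h * α ≠ 0 := by positivity
  field_simp
  ring

section MatNorm

variable {d : ℕ} {Z : Matrix (Fin d) (Fin d) ℝ}

theorem matNorm_sub_le (hZ : Z.PosSemidef) (x y : Fin d → ℝ) :
    matNorm Z (x - y) ≤ matNorm Z x + matNorm Z y := by
  have hx := posSemidef_dotProduct_mulVec_self_nonneg hZ x
  have hy := posSemidef_dotProduct_mulVec_self_nonneg hZ y
  have cauchySchwarz : -(x ⬝ᵥ (Z *ᵥ y)) ≤ matNorm Z x * matNorm Z y := by
    rw [matNorm, matNorm, ← Real.sqrt_mul hx]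
    exact (neg_le_abs _).trans (Real.abs_le_sqrt (posSemidef_sq_dotProduct_mulVec_le hZ x y))
  refine Real.sqrt_le_iff.2 ⟨add_nonneg (Real.sqrt_nonneg _) (Real.sqrt_nonneg _), ?_⟩
  rw [add_sq, matNorm, matNorm, Real.sq_sqrt hx, Real.sq_sqrt hy]
  simp only [mulVec_sub, sub_dotProduct, dotProduct_sub,
    isHermitian_dotProduct_mulVec_comm hZ.isHermitian y x]
  rw [matNorm, matNorm] at cauchySchwarz
  linarith

theorem matNorm_inv_mulVec (hZ : IsUnit Z.det) (x : Fin d → ℝ) :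
    matNorm Z (Z⁻¹ *ᵥ x) = matNorm Z⁻¹ x := by
  rw [matNorm, matNorm, mulVec_mulVec, mul_nonsing_inv _ hZ, one_mulVec, dotProduct_comm]

theorem abs_dotProduct_le_matNorm_inv_mul_matNorm (hZ : Z.PosDef) (x y : Fin d → ℝ) :
    |x ⬝ᵥ y| ≤ matNorm Z⁻¹ x * matNorm Z y := by
  have h := posSemidef_sq_dotProduct_mulVec_le hZ.inv.posSemidef x (Z *ᵥ y)
  rw [mulVec_mulVec, nonsing_inv_mul _ hZ.det_pos.ne'.isUnit, one_mulVec] at h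
  rw [matNorm, matNorm, dotProduct_comm y,
    ← Real.sqrt_mul (posSemidef_dotProduct_mulVec_self_nonneg hZ.inv.posSemidef x)]
  exact Real.abs_le_sqrt h

theorem matNorm_inv_smul_le {lam : ℝ} (hl : 0 ≤ lam) (hZ : Z.PosDef)
    (hlam : ∀ y, lam * (y ⬝ᵥ y) ≤ y ⬝ᵥ (Z *ᵥ y)) (x : Fin d → ℝ) :
    matNorm Z⁻¹ (lam • x) ≤ Real.sqrt lam * Real.sqrt (x ⬝ᵥ x) := by
  set z := Z⁻¹ *ᵥ x with hz
  have hZz : Z *ᵥ z = x := by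
    rw [hz, mulVec_mulVec, mul_nonsing_inv _ hZ.det_pos.ne'.isUnit, one_mulVec]
  have hlow : lam * (z ⬝ᵥ z) ≤ x ⬝ᵥ z := by
    simpa only [hZz, dotProduct_comm z x] using hlam z
  have hcs := sq_dotProduct_le_mul x z
  have hx : 0 ≤ x ⬝ᵥ x := by simpa only [star_trivial] using dotProduct_self_star_nonneg x
  have hz_nonneg : 0 ≤ z ⬝ᵥ z := by simpa only [star_trivial] using dotProduct_self_star_nonneg z
  have hxz : 0 ≤ x ⬝ᵥ z := (mul_nonneg hl hz_nonneg).trans hlow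
  have hbound : lam * (x ⬝ᵥ z) ≤ x ⬝ᵥ x := by
    rcases hxz.eq_or_lt with hzero | hpos
    · rwa [← hzero, mul_zero]
    · refine le_of_mul_le_mul_right ?_ hpos
      calc lam * (x ⬝ᵥ z) * (x ⬝ᵥ z) = lam * (x ⬝ᵥ z) ^ 2 := by ring
        _ ≤ lam * ((x ⬝ᵥ x) * (z ⬝ᵥ z)) := mul_le_mul_of_nonneg_left hcs hl
        _ = (x ⬝ᵥ x) * (lam * (z ⬝ᵥ z)) := by ring
        _ ≤ (x ⬝ᵥ x) * (x ⬝ᵥ z) := mul_le_mul_of_nonneg_left hlow hx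
  rw [matNorm, ← Real.sqrt_mul hl, mulVec_smul, dotProduct_smul, smul_dotProduct, smul_eq_mul,
    smul_eq_mul]
  exact Real.sqrt_le_sqrt (mul_le_mul_of_nonneg_left hbound hl)

end MatNorm

section WeightedGram

variable {d : ℕ} {lam : ℝ}

theorem wGram_zero (lam : ℝ) (a : ℕ → Fin d → ℝ) (sb : ℕ → ℝ) : wGram lam a sb 0 = lam • 1 := by
  simp [wGram]

theorem wGram_succ (lam : ℝ) (a : ℕ → Fin d → ℝ) (sb : ℕ → ℝ) (t : ℕ) :
    wGram lam a sb (t + 1) =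
      wGram lam a sb t + (sb (t + 1) ^ 2)⁻¹ • vecMulVec (a (t + 1)) (a (t + 1)) := by
  rw [wGram, wGram, sum_Icc_succ_top (by lia), add_assoc]

theorem wGram_posDef (hl : 0 < lam) (a : ℕ → Fin d → ℝ) (sb : ℕ → ℝ) (t : ℕ) :
    (wGram lam a sb t).PosDef := by
  refine (PosDef.one.smul hl).add_posSemidef (posSemidef_sum _ fun i _ => ?_)
  have h := posSemidef_vecMulVec_self_star (a i)
  rw [star_trivial] at h
  exact h.smul (inv_nonneg.2 (sq_nonneg _))

theorem isUnit_det_wGram (hl : 0 < lam) (a : ℕ → Fin d → ℝ) (sb : ℕ → ℝ) (t : ℕ) :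
    IsUnit (wGram lam a sb t).det :=
  (wGram_posDef hl a sb t).det_pos.ne'.isUnit

theorem wGram_mulVec (lam : ℝ) (a : ℕ → Fin d → ℝ) (sb : ℕ → ℝ) (t : ℕ) (y : Fin d → ℝ) :
    wGram lam a sb t *ᵥ y = lam • y + ∑ i ∈ Icc 1 t, ((sb i ^ 2)⁻¹ * (a i ⬝ᵥ y)) • a i := by
  simp only [wGram, add_mulVec, smul_mulVec, one_mulVec, sum_mulVec, vecMulVec_mulVec,
    op_smul_eq_smul, mul_smul]

theorem mul_dotProduct_self_le_dotProduct_wGram_mulVec (lam : ℝ) (a : ℕ → Fin d → ℝ) (sb : ℕ → ℝ)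
    (t : ℕ) (y : Fin d → ℝ) : lam * (y ⬝ᵥ y) ≤ y ⬝ᵥ (wGram lam a sb t *ᵥ y) := by
  rw [wGram_mulVec, dotProduct_add, dotProduct_smul, smul_eq_mul, dotProduct_sum]
  refine le_add_of_nonneg_right (sum_nonneg fun i _ => ?_)
  rw [dotProduct_smul, smul_eq_mul, dotProduct_comm y (a i), mul_assoc]
  exact mul_nonneg (inv_nonneg.2 (sq_nonneg _)) (mul_self_nonneg _)

theorem trace_wGram_le {A s : ℝ} {a : ℕ → Fin d → ℝ} {sb : ℕ → ℝ} {t : ℕ} (hs : 0 < s)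
    (hsb : ∀ i ∈ Icc 1 t, s ≤ sb i) (ha : ∀ i ∈ Icc 1 t, a i ⬝ᵥ a i ≤ A ^ 2) :
    (wGram lam a sb t).trace ≤ d * lam + t * (A ^ 2 / s ^ 2) := by
  have hterm : ∀ i ∈ Icc 1 t, (sb i ^ 2)⁻¹ * (a i ⬝ᵥ a i) ≤ A ^ 2 / s ^ 2 := fun i hi => by
    have hsi := hsb i hi
    rw [inv_mul_eq_div]
    exact div_le_div₀ (sq_nonneg A) (ha i hi) (by positivity) (by gcongr)
  have hsum := sum_le_card_nsmul _ _ _ hterm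
  rw [Nat.card_Icc, Nat.add_sub_cancel, nsmul_eq_mul] at hsum
  simpa [wGram, trace_sum, trace_vecMulVec, mul_comm lam] using hsum

/-- The squared norm `σ̄_{i+1}^{-2} ‖a_{i+1}‖²` in the inverse Gram matrix `A_i^{-1}`: the
information gained in round `i + 1`. -/
noncomputable def leverage (lam : ℝ) (a : ℕ → Fin d → ℝ) (sb : ℕ → ℝ) (i : ℕ) : ℝ :=
  (sb (i + 1) ^ 2)⁻¹ * (a (i + 1) ⬝ᵥ ((wGram lam a sb i)⁻¹ *ᵥ a (i + 1)))

theorem leverage_nonneg (hl : 0 < lam) (a : ℕ → Fin d → ℝ) (sb : ℕ → ℝ) (i : ℕ) :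
    0 ≤ leverage lam a sb i :=
  mul_nonneg (inv_nonneg.2 (sq_nonneg _))
    (posSemidef_dotProduct_mulVec_self_nonneg (wGram_posDef hl a sb i).inv.posSemidef _)

theorem matNorm_inv_wGram_eq_mul_sqrt_leverage {a : ℕ → Fin d → ℝ} {sb : ℕ → ℝ} {i : ℕ}
    (hsb : 0 < sb (i + 1)) :
    matNorm (wGram lam a sb i)⁻¹ (a (i + 1)) = sb (i + 1) * Real.sqrt (leverage lam a sb i) := by
  rw [matNorm, leverage, Real.sqrt_mul (inv_nonneg.2 (sq_nonneg _)), Real.sqrt_inv,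
    Real.sqrt_sq hsb.le, mul_inv_cancel_left₀ hsb.ne']

theorem log_det_wGram (hl : 0 < lam) (a : ℕ → Fin d → ℝ) (sb : ℕ → ℝ) (t : ℕ) :
    Real.log (wGram lam a sb t).det =
      d * Real.log lam + ∑ i ∈ range t, Real.log (1 + leverage lam a sb i) := by
  induction t with
  | zero => simp [wGram_zero]
  | succ t ih =>
    have hpos : 0 < 1 + leverage lam a sb t := by linarith [leverage_nonneg hl a sb t]
    rw [wGram_succ, det_add_smul_vecMulVec (isUnit_det_wGram hl a sb t), ← leverage,
      Real.log_mul (wGram_posDef hl a sb t).det_pos.ne' hpos.ne', ih, sum_range_succ, add_assoc]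

theorem sum_log_one_add_leverage_le {A s : ℝ} {a : ℕ → Fin d → ℝ} {sb : ℕ → ℝ} {t : ℕ}
    (hd : 1 ≤ d) (hl : 0 < lam) (hs : 0 < s) (hsb : ∀ i ∈ Icc 1 t, s ≤ sb i)
    (ha : ∀ i ∈ Icc 1 t, a i ⬝ᵥ a i ≤ A ^ 2) :
    ∑ i ∈ range t, Real.log (1 + leverage lam a sb i) ≤
      d * Real.log (1 + t * A ^ 2 / (d * lam * s ^ 2)) := by
  have : NeZero d := ⟨by lia⟩
  have hd' : (0 : ℝ) < d := by exact_mod_cast hd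
  have hZ := wGram_posDef hl a sb t
  have hpos : 0 < 1 + t * A ^ 2 / (d * lam * s ^ 2) := by positivity
  have hdet : (wGram lam a sb t).det ≤ (lam * (1 + t * A ^ 2 / (d * lam * s ^ 2))) ^ d := by
    have hdet_trace := posSemidef_det_le_trace_div_card_pow hZ.posSemidef
    rw [Fintype.card_fin] at hdet_trace
    refine hdet_trace.trans (pow_le_pow_left₀ (div_nonneg hZ.posSemidef.trace_nonneg hd'.le) ?_ d)
    rw [div_le_iff₀ hd']
    refine (trace_wGram_le hs hsb ha).trans (le_of_eq ?_)
    field_simp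
  have hlog := Real.log_le_log hZ.det_pos hdet
  rw [Real.log_pow, Real.log_mul hl.ne' hpos.ne', log_det_wGram hl] at hlog
  linarith

end WeightedGram

section SbMin

variable {sb : ℕ → ℝ} {t : ℕ}

theorem sbMin_eq_inf' (sb : ℕ → ℝ) (ht : 1 ≤ t) :
    sbMin sb t = (Icc 1 t).inf' (nonempty_Icc.2 ht) sb := by
  rw [inf'_eq_csInf_image, coe_Icc, sbMin]

theorem sbMin_le {i : ℕ} (hi : i ∈ Icc 1 t) : sbMin sb t ≤ sb i := by
  rw [sbMin_eq_inf' sb (by grind)]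
  exact inf'_le sb hi

theorem le_sbMin {s : ℝ} (ht : 1 ≤ t) (hs : ∀ i ∈ Icc 1 t, s ≤ sb i) : s ≤ sbMin sb t := by
  rw [sbMin_eq_inf' sb ht]
  exact le_inf' _ _ hs

theorem sbMin_pos (ht : 1 ≤ t) (hsb : ∀ i ∈ Icc 1 t, 0 < sb i) : 0 < sbMin sb t := by
  rw [sbMin_eq_inf' sb ht]
  exact (lt_inf'_iff _).2 hsb

end SbMin

section Radius

/-- The logarithmic confidence level `log (4t²/δ)`; it is `0` at `t = 0` by the convention
`log 0 = 0`. -/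
noncomputable def confLevel (δ : ℝ) (t : ℕ) : ℝ := Real.log (4 * (t : ℝ) ^ 2 / δ)

/-- The radius `β̂_t` as a function of the smallest weight `s`. -/
noncomputable def confRadius (d : ℕ) (A R lam δ s : ℝ) (t : ℕ) : ℝ :=
  8 * Real.sqrt (d * Real.log (1 + t * A ^ 2 / (d * lam * s ^ 2)) * confLevel δ t) +
    4 * (R / s) * confLevel δ t

variable {d : ℕ} {A R lam δ s : ℝ} {t : ℕ}

theorem two_mul_log_two_le_confLevel (hδ0 : 0 < δ) (hδ1 : δ < 1) (ht : 1 ≤ t) :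
    2 * Real.log 2 ≤ confLevel δ t := by
  have ht' : (1 : ℝ) ≤ t := by exact_mod_cast ht
  rw [← Nat.cast_two, ← Real.log_pow, confLevel]
  refine Real.log_le_log (by norm_num) ?_
  rw [le_div_iff₀ hδ0, Nat.cast_two]
  nlinarith

theorem confLevel_pos (hδ0 : 0 < δ) (hδ1 : δ < 1) (ht : 1 ≤ t) : 0 < confLevel δ t :=
  (mul_pos two_pos (Real.log_pos one_lt_two)).trans_le (two_mul_log_two_le_confLevel hδ0 hδ1 ht)

theorem confLevel_zero (δ : ℝ) : confLevel δ 0 = 0 := by simp [confLevel]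

theorem confLevel_nonneg (hδ0 : 0 < δ) (hδ1 : δ < 1) (t : ℕ) : 0 ≤ confLevel δ t := by
  rcases Nat.eq_zero_or_pos t with rfl | ht
  · exact (confLevel_zero δ).ge
  · exact (confLevel_pos hδ0 hδ1 ht).le

theorem confLevel_mono (hδ0 : 0 < δ) (hδ1 : δ < 1) : Monotone (confLevel δ) := by
  intro i k hik
  rcases Nat.eq_zero_or_pos i with rfl | hi
  · exact (confLevel_zero δ).trans_le (confLevel_nonneg hδ0 hδ1 k)
  · rw [confLevel, confLevel]
    gcongr

theorem exp_neg_confLevel (hδ0 : 0 < δ) (ht : 1 ≤ t) :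
    Real.exp (-confLevel δ t) = δ / 4 * ((t : ℝ) ^ 2)⁻¹ := by
  rw [confLevel, Real.exp_neg, Real.exp_log (by positivity)]
  field_simp

theorem sum_two_mul_exp_neg_confLevel_le (hδ0 : 0 < δ) (T : ℕ) :
    ∑ j ∈ range T, 2 * Real.exp (-confLevel δ (j + 1)) ≤ δ := by
  have hbasel : ∑ j ∈ range T, (((j + 1 : ℕ) : ℝ) ^ 2)⁻¹ ≤ 2 := by
    have h := sum_Ioo_inv_sq_le (α := ℝ) 0 (T + 1)
    rw [← Ico_add_one_left_eq_Ioo, sum_Ico_eq_sum_range] at h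
    simpa [add_comm] using h
  calc ∑ j ∈ range T, 2 * Real.exp (-confLevel δ (j + 1))
      = δ / 2 * ∑ j ∈ range T, (((j + 1 : ℕ) : ℝ) ^ 2)⁻¹ := by
        rw [mul_sum]
        refine sum_congr rfl fun j _ => ?_
        rw [exp_neg_confLevel hδ0 (Nat.le_add_left 1 j)]
        ring
    _ ≤ δ / 2 * 2 := by gcongr
    _ = δ := by ring

theorem log_one_add_div_nonneg (hl : 0 ≤ lam) :
    0 ≤ Real.log (1 + t * A ^ 2 / (d * lam * s ^ 2)) :=
  Real.log_nonneg (le_add_of_nonneg_right (by positivity))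

theorem confRadius_pos (hR : 0 < R) (hs : 0 < s) (hδ0 : 0 < δ) (hδ1 : δ < 1) (ht : 1 ≤ t) :
    0 < confRadius d A R lam δ s t := by
  have hL := confLevel_pos hδ0 hδ1 ht
  unfold confRadius
  positivity

theorem confRadius_nonneg (hR : 0 ≤ R) (hs : 0 ≤ s) (hδ0 : 0 < δ) (hδ1 : δ < 1) (t : ℕ) :
    0 ≤ confRadius d A R lam δ s t := by
  have hL := confLevel_nonneg hδ0 hδ1 t
  unfold confRadius
  positivity

theorem confRadius_le_confRadius (hd : 1 ≤ d) (hl : 0 < lam) (hR : 0 ≤ R) (hδ0 : 0 < δ)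
    (hδ1 : δ < 1) {s' : ℝ} {t' : ℕ} (hs : 0 < s) (hss' : s ≤ s') (htt' : t' ≤ t) :
    confRadius d A R lam δ s' t' ≤ confRadius d A R lam δ s t := by
  have hs' := hs.trans_le hss'
  have hL := confLevel_mono hδ0 hδ1 htt'
  have hL0 := confLevel_nonneg hδ0 hδ1 t'
  have hlog0 := log_one_add_div_nonneg (d := d) (A := A) (s := s) (t := t) hl.le
  have hlog : Real.log (1 + t' * A ^ 2 / (d * lam * s' ^ 2)) ≤
      Real.log (1 + t * A ^ 2 / (d * lam * s ^ 2)) := by gcongr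
  unfold confRadius
  gcongr

theorem mul_log_mul_confLevel_le_sq_confRadius (hl : 0 ≤ lam) (hR : 0 ≤ R) (hs : 0 ≤ s)
    (hδ0 : 0 < δ) (hδ1 : δ < 1) (t : ℕ) :
    d * Real.log (1 + t * A ^ 2 / (d * lam * s ^ 2)) * confLevel δ t ≤
      confRadius d A R lam δ s t ^ 2 / 64 := by
  have hL := confLevel_nonneg hδ0 hδ1 t
  have hlog := log_one_add_div_nonneg (d := d) (A := A) (s := s) (t := t) hl
  set X := d * Real.log (1 + t * A ^ 2 / (d * lam * s ^ 2)) * confLevel δ t with hX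
  have hX0 : 0 ≤ X := by positivity
  calc X = (8 * Real.sqrt X) ^ 2 / 64 := by rw [mul_pow, Real.sq_sqrt hX0]; ring
    _ ≤ _ := by
      rw [confRadius, ← hX]
      gcongr
      exact le_add_of_nonneg_right (by positivity)

theorem sq_div_mul_sq_confLevel_le_sq_confRadius (hR : 0 ≤ R) (hs : 0 ≤ s) (hδ0 : 0 < δ)
    (hδ1 : δ < 1) (t : ℕ) :
    (R / s) ^ 2 * confLevel δ t ^ 2 ≤ confRadius d A R lam δ s t ^ 2 / 16 := by
  have hL := confLevel_nonneg hδ0 hδ1 t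
  calc (R / s) ^ 2 * confLevel δ t ^ 2 = (4 * (R / s) * confLevel δ t) ^ 2 / 16 := by ring
    _ ≤ _ := by
      rw [confRadius]
      gcongr
      exact le_add_of_nonneg_left (by positivity)

theorem betaHat_eq_confRadius (d : ℕ) (A R lam δ : ℝ) (sb : ℕ → ℝ) (t : ℕ) :
    betaHat d A R lam δ sb t = confRadius d A R lam δ (sbMin sb t) t := by
  rcases Nat.eq_zero_or_pos t with rfl | ht
  · simp [betaHat, confRadius, confLevel_zero]
  · rw [betaHat, if_neg ht.ne', confRadius, confLevel]

theorem betaHat_zero (d : ℕ) (A R lam δ : ℝ) (sb : ℕ → ℝ) : betaHat d A R lam δ sb 0 = 0 :=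
  if_pos rfl

variable {sb : ℕ → ℝ}

theorem betaHat_pos (hR : 0 < R) (hδ0 : 0 < δ) (hδ1 : δ < 1) (ht : 1 ≤ t)
    (hsb : ∀ i ∈ Icc 1 t, 0 < sb i) : 0 < betaHat d A R lam δ sb t := by
  rw [betaHat_eq_confRadius]
  exact confRadius_pos hR (sbMin_pos ht hsb) hδ0 hδ1 ht

theorem betaHat_le_confRadius (hd : 1 ≤ d) (hl : 0 < lam) (hR : 0 ≤ R) (hδ0 : 0 < δ)
    (hδ1 : δ < 1) {i : ℕ} (hit : i ≤ t) (hs : 0 < s) (hsb : ∀ k ∈ Icc 1 i, s ≤ sb k) :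
    betaHat d A R lam δ sb i ≤ confRadius d A R lam δ s t := by
  rcases Nat.eq_zero_or_pos i with rfl | hi
  · exact (betaHat_zero ..).trans_le (confRadius_nonneg hR hs.le hδ0 hδ1 t)
  · rw [betaHat_eq_confRadius]
    exact confRadius_le_confRadius hd hl hR hδ0 hδ1 hs (le_sbMin hi hsb) hit

theorem betaHat_mono (hd : 1 ≤ d) (hl : 0 < lam) (hR : 0 ≤ R) (hδ0 : 0 < δ) (hδ1 : δ < 1)
    (hsb : ∀ i, 1 ≤ i → 0 < sb i) : Monotone (betaHat d A R lam δ sb) := by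
  refine monotone_nat_of_le_succ fun t => ?_
  rw [betaHat_eq_confRadius _ _ _ _ _ _ (t + 1)]
  exact betaHat_le_confRadius hd hl hR hδ0 hδ1 t.le_succ
    (sbMin_pos (by lia) fun i hi => hsb i (mem_Icc.1 hi).1) fun k hk => sbMin_le (by grind)

end Radius

section NoiseEnergy

variable {d : ℕ} {lam : ℝ}

/-- The weighted noise sum `∑_{i=1}^t σ̄_i^{-2} ε_i a_i`. -/
noncomputable def noiseSum (a : ℕ → Fin d → ℝ) (sb e : ℕ → ℝ) (t : ℕ) : Fin d → ℝ :=
  ∑ i ∈ Icc 1 t, ((sb i ^ 2)⁻¹ * e i) • a i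

/-- The squared norm of the weighted noise sum in the inverse Gram matrix `A_t^{-1}`: the stochastic
part of the squared estimation error. -/
noncomputable def noiseEnergy (lam : ℝ) (a : ℕ → Fin d → ℝ) (sb e : ℕ → ℝ) (t : ℕ) : ℝ :=
  noiseSum a sb e t ⬝ᵥ ((wGram lam a sb t)⁻¹ *ᵥ noiseSum a sb e t)

/-- Half the coefficient of the noise `ε_{i+1}` in the increment of the noise energy. -/
noncomputable def noiseDrift (lam : ℝ) (a : ℕ → Fin d → ℝ) (sb e : ℕ → ℝ) (i : ℕ) : ℝ :=
  (sb (i + 1) ^ 2)⁻¹ * (a (i + 1) ⬝ᵥ ((wGram lam a sb i)⁻¹ *ᵥ noiseSum a sb e i)) /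
    (1 + leverage lam a sb i)

theorem noiseSum_zero (a : ℕ → Fin d → ℝ) (sb e : ℕ → ℝ) : noiseSum a sb e 0 = 0 := by
  simp [noiseSum]

theorem noiseSum_succ (a : ℕ → Fin d → ℝ) (sb e : ℕ → ℝ) (t : ℕ) :
    noiseSum a sb e (t + 1) =
      noiseSum a sb e t + ((sb (t + 1) ^ 2)⁻¹ * e (t + 1)) • a (t + 1) := by
  rw [noiseSum, noiseSum, sum_Icc_succ_top (by lia)]

theorem noiseEnergy_zero (lam : ℝ) (a : ℕ → Fin d → ℝ) (sb e : ℕ → ℝ) :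
    noiseEnergy lam a sb e 0 = 0 := by
  rw [noiseEnergy, noiseSum_zero, zero_dotProduct]

theorem noiseEnergy_nonneg (hl : 0 < lam) (a : ℕ → Fin d → ℝ) (sb e : ℕ → ℝ) (t : ℕ) :
    0 ≤ noiseEnergy lam a sb e t :=
  posSemidef_dotProduct_mulVec_self_nonneg (wGram_posDef hl a sb t).inv.posSemidef _

theorem noiseEnergy_succ_le (hl : 0 < lam) (a : ℕ → Fin d → ℝ) (sb e : ℕ → ℝ) (t : ℕ) :
    noiseEnergy lam a sb e (t + 1) ≤ noiseEnergy lam a sb e t +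
      (2 * e (t + 1) * noiseDrift lam a sb e t + e (t + 1) ^ 2 *
        ((sb (t + 1) ^ 2)⁻¹ * (leverage lam a sb t / (1 + leverage lam a sb t)))) := by
  rw [noiseEnergy, wGram_succ, noiseSum_succ]
  exact posDef_dotProduct_inv_rankOne_update_le (wGram_posDef hl a sb t)
    (inv_nonneg.2 (sq_nonneg _)) (e (t + 1)) (noiseSum a sb e t) (a (t + 1))

theorem sq_noiseDrift_le (hl : 0 < lam) (a : ℕ → Fin d → ℝ) (sb e : ℕ → ℝ) (i : ℕ) :
    noiseDrift lam a sb e i ^ 2 ≤ (sb (i + 1) ^ 2)⁻¹ *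
      (leverage lam a sb i / (1 + leverage lam a sb i) *
        (1 - leverage lam a sb i / (1 + leverage lam a sb i))) * noiseEnergy lam a sb e i := by
  have hw := leverage_nonneg hl a sb i
  have hcs := posSemidef_sq_dotProduct_mulVec_le (wGram_posDef hl a sb i).inv.posSemidef
    (a (i + 1)) (noiseSum a sb e i)
  rw [noiseDrift]
  set h := (sb (i + 1) ^ 2)⁻¹
  set w := leverage lam a sb i
  have hw_eq : h * (a (i + 1) ⬝ᵥ ((wGram lam a sb i)⁻¹ *ᵥ a (i + 1))) = w := rfl
  calc (h * (a (i + 1) ⬝ᵥ ((wGram lam a sb i)⁻¹ *ᵥ noiseSum a sb e i)) / (1 + w)) ^ 2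
      = (h / (1 + w)) ^ 2 *
          (a (i + 1) ⬝ᵥ ((wGram lam a sb i)⁻¹ *ᵥ noiseSum a sb e i)) ^ 2 := by ring
    _ ≤ (h / (1 + w)) ^ 2 *
          ((a (i + 1) ⬝ᵥ ((wGram lam a sb i)⁻¹ *ᵥ a (i + 1))) * noiseEnergy lam a sb e i) := by
        gcongr
        exact hcs
    _ = h * (h * (a (i + 1) ⬝ᵥ ((wGram lam a sb i)⁻¹ *ᵥ a (i + 1)))) / (1 + w) ^ 2 *
          noiseEnergy lam a sb e i := by field_simp
    _ = h * (w / (1 + w) * (1 - w / (1 + w))) * noiseEnergy lam a sb e i := by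
        have : 1 + w ≠ 0 := by positivity
        rw [hw_eq]
        field_simp
        ring

theorem weight_mul_sq_confLevel_le_sq_betaHat {A R δ : ℝ} {sb : ℕ → ℝ} {t : ℕ} (hR : 0 ≤ R)
    (hδ0 : 0 < δ) (hδ1 : δ < 1) (ht : 1 ≤ t) (hsb : ∀ i ∈ Icc 1 t, 0 < sb i) :
    R ^ 2 * (sb t ^ 2)⁻¹ * confLevel δ t ^ 2 ≤ betaHat d A R lam δ sb t ^ 2 / 16 := by
  have hs := sbMin_pos ht hsb
  have hsbt := hsb t (by simp [ht])
  have hle : sbMin sb t ≤ sb t := sbMin_le (by simp [ht])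
  rw [betaHat_eq_confRadius]
  refine le_trans ?_ (sq_div_mul_sq_confLevel_le_sq_confRadius hR hs.le hδ0 hδ1 t)
  rw [← div_eq_mul_inv, ← div_pow]
  gcongr

theorem sum_leverage_div_mul_confLevel_le_sq_betaHat {A R δ : ℝ} {a : ℕ → Fin d → ℝ}
    {sb : ℕ → ℝ} {t : ℕ} (hd : 1 ≤ d) (hl : 0 < lam) (hR : 0 ≤ R) (hδ0 : 0 < δ) (hδ1 : δ < 1)
    (hsb : ∀ i ∈ Icc 1 t, 0 < sb i) (ha : ∀ i ∈ Icc 1 t, a i ⬝ᵥ a i ≤ A ^ 2) :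
    (∑ i ∈ range t, leverage lam a sb i / (1 + leverage lam a sb i)) * confLevel δ t ≤
      betaHat d A R lam δ sb t ^ 2 / 64 := by
  rcases Nat.eq_zero_or_pos t with rfl | ht
  · simp [betaHat_zero]
  have hs : 0 < sbMin sb t := sbMin_pos ht hsb
  have hlog : ∀ i ∈ range t, leverage lam a sb i / (1 + leverage lam a sb i) ≤
      Real.log (1 + leverage lam a sb i) := fun i _ => by
    have hpos : 0 < 1 + leverage lam a sb i := by linarith [leverage_nonneg hl a sb i]
    refine le_of_eq_of_le ?_ (Real.one_sub_inv_le_log_of_pos hpos)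
    field_simp
    ring
  have hpotential := (sum_le_sum hlog).trans
    (sum_log_one_add_leverage_le hd hl hs (fun i hi => sbMin_le hi) ha)
  rw [betaHat_eq_confRadius]
  exact (mul_le_mul_of_nonneg_right hpotential (confLevel_nonneg hδ0 hδ1 t)).trans
    (mul_log_mul_confLevel_le_sq_confRadius hl.le hR hs.le hδ0 hδ1 t)

theorem bernsteinRecursion_noiseEnergy {A R δ : ℝ} {a : ℕ → Fin d → ℝ} {sb : ℕ → ℝ} (hd : 1 ≤ d)
    (hl : 0 < lam) (hR : 0 < R) (hδ0 : 0 < δ) (hδ1 : δ < 1) (hsb : ∀ i, 1 ≤ i → 0 < sb i)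
    (ha : ∀ i, 1 ≤ i → a i ⬝ᵥ a i ≤ A ^ 2) (e : ℕ → ℝ) :
    BernsteinRecursion R (confLevel δ) (betaHat d A R lam δ sb) (fun i => (sb (i + 1) ^ 2)⁻¹)
      (fun i => leverage lam a sb i / (1 + leverage lam a sb i)) (noiseDrift lam a sb e)
      (noiseEnergy lam a sb e) (fun i => e (i + 1)) where
  energy_zero := noiseEnergy_zero lam a sb e
  energy_nonneg := noiseEnergy_nonneg hl a sb e
  energy_succ_le := noiseEnergy_succ_le hl a sb e
  weight_pos i := inv_pos.2 (pow_pos (hsb (i + 1) (by lia)) 2)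
  leverage_nonneg i := by
    have := leverage_nonneg hl a sb i
    positivity
  leverage_le_one i := by
    have := leverage_nonneg hl a sb i
    exact div_le_one_of_le₀ (by linarith) (by positivity)
  sq_drift_le := sq_noiseDrift_le hl a sb e
  radius_zero := betaHat_zero ..
  radius_pos i := betaHat_pos hR hδ0 hδ1 (by lia) fun k hk => hsb k (mem_Icc.1 hk).1
  radius_mono := betaHat_mono hd hl hR.le hδ0 hδ1 hsb
  level_mono := confLevel_mono hδ0 hδ1
  two_log_two_le_level i := two_mul_log_two_le_confLevel hδ0 hδ1 (by lia)
  weight_le i := weight_mul_sq_confLevel_le_sq_betaHat hR.le hδ0 hδ1 (by lia)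
    fun k hk => hsb k (mem_Icc.1 hk).1
  sum_leverage_le t := sum_leverage_div_mul_confLevel_le_sq_betaHat hd hl hR.le hδ0 hδ1
    (fun k hk => hsb k (mem_Icc.1 hk).1) fun k hk => ha k (mem_Icc.1 hk).1

end NoiseEnergy

section Estimator

variable {d : ℕ} {lam : ℝ}

theorem sub_wEst_eq (hl : 0 < lam) (a : ℕ → Fin d → ℝ) (sb e : ℕ → ℝ) (μ : Fin d → ℝ) (t : ℕ) :
    μ - wEst lam a sb (fun i => μ ⬝ᵥ a i + e i) t =
      (wGram lam a sb t)⁻¹ *ᵥ (lam • μ - noiseSum a sb e t) := by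
  have hsum : ∑ i ∈ Icc 1 t, ((sb i ^ 2)⁻¹ * (μ ⬝ᵥ a i + e i)) • a i =
      wGram lam a sb t *ᵥ μ - (lam • μ - noiseSum a sb e t) := by
    simp only [wGram_mulVec, noiseSum, mul_add, add_smul, sum_add_distrib, dotProduct_comm μ]
    abel
  rw [wEst, hsum, mulVec_sub, mulVec_mulVec, nonsing_inv_mul _ (isUnit_det_wGram hl a sb t),
    one_mulVec, sub_sub_cancel]

theorem mem_confSet_wEst (hl : 0 < lam) (a : ℕ → Fin d → ℝ) (sb : ℕ → ℝ) {e : ℕ → ℝ}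
    {μ : Fin d → ℝ} {B b : ℝ} {t : ℕ} (hμ : Real.sqrt (μ ⬝ᵥ μ) ≤ B) (hb : 0 ≤ b)
    (hQ : noiseEnergy lam a sb e t ≤ b ^ 2) :
    μ ∈ confSet lam B b (wGram lam a sb t) (wEst lam a sb (fun i => μ ⬝ᵥ a i + e i) t) := by
  have hZ := wGram_posDef hl a sb t
  have hbias : matNorm (wGram lam a sb t)⁻¹ (lam • μ) ≤ Real.sqrt lam * B :=
    (matNorm_inv_smul_le hl.le hZ
      (mul_dotProduct_self_le_dotProduct_wGram_mulVec lam a sb t) μ).trans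
      (mul_le_mul_of_nonneg_left hμ (Real.sqrt_nonneg _))
  have hnoise : matNorm (wGram lam a sb t)⁻¹ (noiseSum a sb e t) ≤ b := Real.sqrt_le_iff.2 ⟨hb, hQ⟩
  change matNorm _ (μ - _) ≤ _
  rw [sub_wEst_eq hl, matNorm_inv_mulVec (isUnit_det_wGram hl a sb t)]
  linarith [matNorm_sub_le hZ.inv.posSemidef (lam • μ) (noiseSum a sb e t)]

theorem dotProduct_sub_le_of_mem_confSet {B b : ℝ} {Z : Matrix (Fin d) (Fin d) ℝ}
    {μh μ μ' : Fin d → ℝ} (hZ : Z.PosDef) (hμ : μ ∈ confSet lam B b Z μh)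
    (hμ' : μ' ∈ confSet lam B b Z μh) (x : Fin d → ℝ) :
    x ⬝ᵥ μ' - x ⬝ᵥ μ ≤ 2 * (b + Real.sqrt lam * B) * matNorm Z⁻¹ x := by
  have hx : 0 ≤ matNorm Z⁻¹ x := Real.sqrt_nonneg _
  have hclose : ∀ ν ∈ confSet lam B b Z μh,
      |x ⬝ᵥ (ν - μh)| ≤ matNorm Z⁻¹ x * (b + Real.sqrt lam * B) := fun ν hν =>
    (abs_dotProduct_le_matNorm_inv_mul_matNorm hZ x _).trans (mul_le_mul_of_nonneg_left hν hx)
  have h := (abs_le.1 (hclose μ hμ)).1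
  have h' := (abs_le.1 (hclose μ' hμ')).2
  rw [dotProduct_sub] at h h'
  linarith

end Estimator

section Measurability

variable {Ω : Type*} {mΩ : MeasurableSpace Ω}

section Matrix

variable {n : Type*} [Fintype n] {M : Ω → Matrix n n ℝ}

theorem measurable_dotProduct {x y : Ω → n → ℝ} (hx : Measurable x) (hy : Measurable y) :
    Measurable fun ω => x ω ⬝ᵥ y ω := by
  simp only [dotProduct]
  fun_prop

theorem measurable_mulVec {x : Ω → n → ℝ} (hM : ∀ i j, Measurable fun ω => M ω i j)
    (hx : Measurable x) : Measurable fun ω => M ω *ᵥ x ω :=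
  measurable_pi_iff.2 fun i => measurable_dotProduct (measurable_pi_iff.2 (hM i)) hx

variable [DecidableEq n]

theorem measurable_det (hM : ∀ i j, Measurable fun ω => M ω i j) :
    Measurable fun ω => (M ω).det := by
  simp only [det_apply']
  fun_prop

theorem measurable_matrix_inv_apply (hM : ∀ i j, Measurable fun ω => M ω i j) (i j : n) :
    Measurable fun ω => (M ω)⁻¹ i j := by
  simp only [Matrix.inv_def, Ring.inverse_eq_inv', Matrix.smul_apply, smul_eq_mul, adjugate_apply]
  refine (measurable_det hM).inv.mul (measurable_det fun k l => ?_)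
  simp only [updateRow_apply]
  split_ifs
  exacts [measurable_const, hM k l]

end Matrix

variable {d : ℕ} {a : ℕ → Ω → Fin d → ℝ} {sb e : ℕ → Ω → ℝ} {t : ℕ}

theorem measurable_wGram_apply (lam : ℝ) (ha : ∀ k ∈ Icc 1 t, Measurable (a k))
    (hsb : ∀ k ∈ Icc 1 t, Measurable (sb k)) (i j : Fin d) :
    Measurable fun ω => wGram lam (fun k => a k ω) (fun k => sb k ω) t i j := by
  simp only [wGram, Matrix.add_apply, Matrix.sum_apply, Matrix.smul_apply, vecMulVec_apply,
    smul_eq_mul]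
  refine measurable_const.add (Finset.measurable_sum _ fun k hk => ?_)
  have := ha k hk
  have := hsb k hk
  fun_prop

theorem measurable_noiseSum (ha : ∀ k ∈ Icc 1 t, Measurable (a k))
    (hsb : ∀ k ∈ Icc 1 t, Measurable (sb k)) (he : ∀ k ∈ Icc 1 t, Measurable (e k)) :
    Measurable fun ω => noiseSum (fun k => a k ω) (fun k => sb k ω) (fun k => e k ω) t :=
  Finset.measurable_sum _ fun k hk => (((hsb k hk).pow_const 2).inv.mul (he k hk)).smul (ha k hk)

theorem measurable_noiseEnergy (lam : ℝ) (ha : ∀ k ∈ Icc 1 t, Measurable (a k))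
    (hsb : ∀ k ∈ Icc 1 t, Measurable (sb k)) (he : ∀ k ∈ Icc 1 t, Measurable (e k)) :
    Measurable fun ω => noiseEnergy lam (fun k => a k ω) (fun k => sb k ω) (fun k => e k ω) t :=
  have hnoise := measurable_noiseSum ha hsb he
  measurable_dotProduct hnoise <|
    measurable_mulVec (measurable_matrix_inv_apply (measurable_wGram_apply lam ha hsb)) hnoise

theorem measurable_leverage (lam : ℝ) (ha : ∀ k ∈ Icc 1 (t + 1), Measurable (a k))
    (hsb : ∀ k ∈ Icc 1 (t + 1), Measurable (sb k)) :
    Measurable fun ω => leverage lam (fun k => a k ω) (fun k => sb k ω) t := by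
  have hinv := measurable_matrix_inv_apply <| measurable_wGram_apply (t := t) lam
    (fun k hk => ha k (by grind)) fun k hk => hsb k (by grind)
  have ha' := ha (t + 1) (by simp)
  exact ((hsb (t + 1) (by simp)).pow_const 2).inv.mul
    (measurable_dotProduct ha' (measurable_mulVec hinv ha'))

theorem measurable_noiseDrift (lam : ℝ) (ha : ∀ k ∈ Icc 1 (t + 1), Measurable (a k))
    (hsb : ∀ k ∈ Icc 1 (t + 1), Measurable (sb k)) (he : ∀ k ∈ Icc 1 t, Measurable (e k)) :
    Measurable fun ω =>
      noiseDrift lam (fun k => a k ω) (fun k => sb k ω) (fun k => e k ω) t := by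
  have ha' : ∀ k ∈ Icc 1 t, Measurable (a k) := fun k hk => ha k (by grind)
  have hsb' : ∀ k ∈ Icc 1 t, Measurable (sb k) := fun k hk => hsb k (by grind)
  have hinv := measurable_matrix_inv_apply (measurable_wGram_apply lam ha' hsb')
  exact (((hsb (t + 1) (by simp)).pow_const 2).inv.mul
    (measurable_dotProduct (ha (t + 1) (by simp))
      (measurable_mulVec hinv (measurable_noiseSum ha' hsb' he)))).div
    ((measurable_leverage lam ha hsb).const_add 1)

theorem measurable_betaHat (A R lam δ : ℝ) (hsb : ∀ k ∈ Icc 1 t, Measurable (sb k)) :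
    Measurable fun ω => betaHat d A R lam δ (fun k => sb k ω) t := by
  have hmin : Measurable fun ω => sbMin (fun k => sb k ω) t :=
    .sInf (Set.to_countable _) fun k hk => hsb k (mem_Icc.2 hk)
  simp only [betaHat_eq_confRadius, confRadius]
  fun_prop

end Measurability

section Confidence

variable {Ω : Type*} {mΩ : MeasurableSpace Ω} {P : Measure Ω} [IsProbabilityMeasure P]
  {G : Filtration ℕ mΩ} {d : ℕ} {δ lam A R : ℝ} {a : ℕ → Ω → Fin d → ℝ} {ε sb : ℕ → Ω → ℝ}

theorem measure_exists_sq_betaHat_lt_noiseEnergy_le (hd : 1 ≤ d) (hl : 0 < lam) (hR : 0 < R)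
    (hδ0 : 0 < δ) (hδ1 : δ < 1) (ha : ∀ t, 1 ≤ t → ∀ ω, a t ω ⬝ᵥ a t ω ≤ A ^ 2)
    (ha_meas : ∀ t, 1 ≤ t → Measurable[G t] (a t))
    (hsb : ∀ t, 1 ≤ t → ∀ ω, 0 < sb t ω) (hsb_meas : ∀ t, 1 ≤ t → Measurable[G t] (sb t))
    (hε_meas : ∀ t, 1 ≤ t → Measurable[G (t + 1)] (ε t))
    (hε_bdd : ∀ t, 1 ≤ t → ∀ᵐ ω ∂P, |ε t ω| ≤ R) (hε_mean : ∀ t, 1 ≤ t → P[ε t | G t] =ᵐ[P] 0)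
    (hε_var : ∀ t, 1 ≤ t → P[fun ω => ε t ω ^ 2 | G t] ≤ᵐ[P] fun ω => sb t ω ^ 2) (T : ℕ) :
    P {ω | ∃ t ≤ T, betaHat d A R lam δ (fun i => sb i ω) t ^ 2 <
      noiseEnergy lam (fun i => a i ω) (fun i => sb i ω) (fun i => ε i ω) t} ≤
      ENNReal.ofReal δ := by
  let 𝓕 : Filtration ℕ mΩ :=
    ⟨fun i => G (i + 1), fun _ _ h => G.mono (Nat.succ_le_succ h), fun i => G.le (i + 1)⟩
  have ha' : ∀ i, ∀ k ∈ Icc 1 (i + 1), Measurable[𝓕 i] (a k) := fun i k hk =>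
    (ha_meas k (mem_Icc.1 hk).1).mono (G.mono (mem_Icc.1 hk).2) le_rfl
  have hsb' : ∀ i, ∀ k ∈ Icc 1 (i + 1), Measurable[𝓕 i] (sb k) := fun i k hk =>
    (hsb_meas k (mem_Icc.1 hk).1).mono (G.mono (mem_Icc.1 hk).2) le_rfl
  have hε' : ∀ i, ∀ k ∈ Icc 1 i, Measurable[𝓕 i] (ε k) := fun i k hk =>
    (hε_meas k (mem_Icc.1 hk).1).mono (G.mono (by grind)) le_rfl
  have hrec := fun ω => bernsteinRecursion_noiseEnergy hd hl hR hδ0 hδ1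
    (fun i hi => hsb i hi ω) (fun i hi => ha i hi ω) fun i => ε i ω
  refine (BernsteinRecursion.measure_exists_sq_lt_energy_le (𝓕 := 𝓕) hrec hR ?_ ?_ ?_ ?_ ?_
    (fun i => hε_meas (i + 1) (by lia)) (fun i => hε_bdd (i + 1) (by lia))
    (fun i => hε_mean (i + 1) (by lia)) (fun i => ?_) T).trans
    (ENNReal.ofReal_le_ofReal (sum_two_mul_exp_neg_confLevel_le hδ0 T))
  · exact fun i => measurable_betaHat A R lam δ fun k hk => hsb' (i - 1) k (by grind)
  · exact fun i => ((hsb' i (i + 1) (by simp)).pow_const 2).inv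
  · intro i
    have := measurable_leverage lam (ha' i) (hsb' i)
    fun_prop
  · exact fun i => measurable_noiseDrift lam (ha' i) (hsb' i) (hε' i)
  · exact fun i => measurable_noiseEnergy lam (fun k hk => ha' i k (by grind))
      (fun k hk => hsb' i k (by grind)) (hε' i)
  · simpa only [inv_inv] using hε_var (i + 1) (by lia)

end Confidence

section Regret

theorem min_one_le_two_mul_log_one_add {x : ℝ} (hx : 0 ≤ x) : min 1 x ≤ 2 * Real.log (1 + x) := by
  have hlog := Real.le_log_one_add_of_nonneg hx
  suffices min 1 x ≤ 2 * (2 * x / (x + 2)) by linarith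
  rw [← mul_div_assoc, le_div_iff₀ (by linarith)]
  rcases le_total x 1 with h | h
  · rw [min_eq_right h]
    nlinarith
  · rw [min_eq_left h]
    linarith

theorem le_log_add_mul_sqrt_min {r b c w : ℝ} (hb : 0 ≤ b) (hc : 0 ≤ c) (hw : 0 ≤ w) (hr : r ≤ 2)
    (hr' : r ≤ 2 * b * (c * Real.sqrt w)) :
    r ≤ 4 * Real.log (1 + w) + 2 * b * (c * Real.sqrt (min 1 w)) := by
  have hmin := min_one_le_two_mul_log_one_add hw
  rcases le_total w 1 with h | h
  · rw [min_eq_right h] at hmin ⊢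
    linarith
  · rw [min_eq_left h] at hmin ⊢
    have : 0 ≤ 2 * b * (c * Real.sqrt 1) := by positivity
    linarith

theorem sum_le_of_le_two_of_le_mul_sqrt {ι : Type*} {s : Finset ι} {r c w : ι → ℝ} {b S : ℝ}
    (hb : 0 ≤ b) (hc : ∀ i ∈ s, 0 ≤ c i) (hw : ∀ i ∈ s, 0 ≤ w i) (hr : ∀ i ∈ s, r i ≤ 2)
    (hr' : ∀ i ∈ s, r i ≤ 2 * b * (c i * Real.sqrt (w i)))
    (hS : ∑ i ∈ s, Real.log (1 + w i) ≤ S) :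
    ∑ i ∈ s, r i ≤ 4 * S + 2 * b * Real.sqrt (2 * S) * Real.sqrt (∑ i ∈ s, c i ^ 2) := by
  have hmin : ∑ i ∈ s, Real.sqrt (min 1 (w i)) ^ 2 ≤ 2 * S :=
    calc ∑ i ∈ s, Real.sqrt (min 1 (w i)) ^ 2 ≤ ∑ i ∈ s, 2 * Real.log (1 + w i) :=
          sum_le_sum fun i hi => (Real.sq_sqrt (le_min zero_le_one (hw i hi))).trans_le
            (min_one_le_two_mul_log_one_add (hw i hi))
      _ ≤ 2 * S := by rw [← mul_sum]; gcongr
  calc ∑ i ∈ s, r i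
      ≤ ∑ i ∈ s, (4 * Real.log (1 + w i) + 2 * b * (c i * Real.sqrt (min 1 (w i)))) :=
        sum_le_sum fun i hi => le_log_add_mul_sqrt_min hb (hc i hi) (hw i hi) (hr i hi) (hr' i hi)
    _ = 4 * ∑ i ∈ s, Real.log (1 + w i) + 2 * b * ∑ i ∈ s, c i * Real.sqrt (min 1 (w i)) := by
        rw [sum_add_distrib, ← mul_sum, ← mul_sum]
    _ ≤ 4 * S + 2 * b * (Real.sqrt (∑ i ∈ s, c i ^ 2) * Real.sqrt (2 * S)) := by
        gcongr
        exact (Real.sum_mul_le_sqrt_mul_sqrt _ _ _).trans (by gcongr)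
    _ = _ := by ring

theorem sum_Icc_one_eq_sum_range {M : Type*} [AddCommMonoid M] (f : ℕ → M) (T : ℕ) :
    ∑ t ∈ Icc 1 T, f t = ∑ i ∈ range T, f (i + 1) := by
  rw [← Ico_add_one_right_eq_Icc, sum_Ico_eq_sum_range, Nat.add_sub_cancel]
  simp only [add_comm]

variable {d : ℕ} {A B R lam δ : ℝ}

/-- The optimistic selection rule: `x` attains the largest reward that any action in `D` has under
any parameter in the confidence set `C`. -/
def IsOptimistic (D C : Set (Fin d → ℝ)) (x : Fin d → ℝ) : Prop :=
  ∃ μt ∈ C, ∀ v ∈ D, ∀ μ ∈ C, v ⬝ᵥ μ ≤ x ⬝ᵥ μt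

theorem IsOptimistic.dotProduct_sub_le {D : Set (Fin d → ℝ)} {Z : Matrix (Fin d) (Fin d) ℝ}
    {b : ℝ} {μh x v μ : Fin d → ℝ} (h : IsOptimistic D (confSet lam B b Z μh) x) (hZ : Z.PosDef)
    (hv : v ∈ D) (hμ : μ ∈ confSet lam B b Z μh) :
    v ⬝ᵥ μ - x ⬝ᵥ μ ≤ 2 * (b + Real.sqrt lam * B) * matNorm Z⁻¹ x := by
  obtain ⟨μt, hμt, hmax⟩ := h
  linarith [hmax v hv μ hμ, dotProduct_sub_le_of_mem_confSet hZ hμ hμt x]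

variable {D : ℕ → Set (Fin d → ℝ)} {a astar : ℕ → Fin d → ℝ} {sb e : ℕ → ℝ} {μ : Fin d → ℝ}

theorem sum_regret_le {s : ℝ} {T : ℕ} (hd : 1 ≤ d) (hl : 0 < lam) (hR : 0 ≤ R) (hδ0 : 0 < δ)
    (hδ1 : δ < 1) (hs : 0 < s) (hsb : ∀ t, 1 ≤ t → s ≤ sb t) (hμ : Real.sqrt (μ ⬝ᵥ μ) ≤ B)
    (hD : ∀ t, 1 ≤ t → ∀ v ∈ D t, Real.sqrt (v ⬝ᵥ v) ≤ A ∧ |v ⬝ᵥ μ| ≤ 1)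
    (ha : ∀ t, 1 ≤ t → a t ∈ D t) (hastar : ∀ t, 1 ≤ t → astar t ∈ D t)
    (hopt : ∀ t, 1 ≤ t → IsOptimistic (D t)
      (confSet lam B (betaHat d A R lam δ sb (t - 1)) (wGram lam a sb (t - 1))
        (wEst lam a sb (fun i => μ ⬝ᵥ a i + e i) (t - 1))) (a t))
    (hQ : ∀ t ≤ T, noiseEnergy lam a sb e t ≤ betaHat d A R lam δ sb t ^ 2) :
    ∑ t ∈ Icc 1 T, (astar t ⬝ᵥ μ - a t ⬝ᵥ μ) ≤
      4 * (d * Real.log (1 + T * A ^ 2 / (d * lam * s ^ 2))) +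
        2 * (confRadius d A R lam δ s T + Real.sqrt lam * B) *
          Real.sqrt (2 * (d * Real.log (1 + T * A ^ 2 / (d * lam * s ^ 2)))) *
          Real.sqrt (∑ t ∈ Icc 1 T, sb t ^ 2) := by
  have hB : 0 ≤ B := (Real.sqrt_nonneg _).trans hμ
  have hsb0 : ∀ t, 1 ≤ t → 0 < sb t := fun t ht => hs.trans_le (hsb t ht)
  have hβ0 := confRadius_nonneg (d := d) (A := A) (lam := lam) hR hs.le hδ0 hδ1 T
  rw [sum_Icc_one_eq_sum_range, sum_Icc_one_eq_sum_range]
  refine sum_le_of_le_two_of_le_mul_sqrt (w := leverage lam a sb) (by positivity)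
    (fun i _ => (hsb0 (i + 1) (by lia)).le) (fun i _ => leverage_nonneg hl a sb i)
    (fun i _ => ?_) (fun i hi => ?_) (sum_log_one_add_leverage_le hd hl hs
      (fun i hi => hsb i (mem_Icc.1 hi).1) fun i hi => ?_)
  · have h := abs_le.1 (hD (i + 1) (by lia) _ (ha (i + 1) (by lia))).2
    have hstar := abs_le.1 (hD (i + 1) (by lia) _ (hastar (i + 1) (by lia))).2
    linarith
  · have hmem := mem_confSet_wEst hl a sb hμ
      ((betaHat_zero ..).ge.trans (betaHat_mono hd hl hR hδ0 hδ1 hsb0 i.zero_le))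
      (hQ i (mem_range.1 hi).le)
    have hβ := betaHat_le_confRadius (A := A) hd hl hR hδ0 hδ1 (mem_range.1 hi).le hs
      fun k hk => hsb k (mem_Icc.1 hk).1
    have hround := hopt (i + 1) (by lia)
    rw [Nat.add_sub_cancel] at hround
    rw [← matNorm_inv_wGram_eq_mul_sqrt_leverage (hsb0 (i + 1) (by lia))]
    refine (hround.dotProduct_sub_le (wGram_posDef hl a sb i) (hastar (i + 1) (by lia))
      hmem).trans ?_
    gcongr
    exact Real.sqrt_nonneg _
  · have ht := (mem_Icc.1 hi).1
    exact (Real.sqrt_le_iff.1 (hD i ht _ (ha i ht)).1).2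

end Regret

theorem ofReal_one_sub_le_measure {Ω : Type*} {mΩ : MeasurableSpace Ω} {P : Measure Ω}
    [IsProbabilityMeasure P] {δ : ℝ} {E F : Set Ω} (hδ : 0 ≤ δ) (hF : P F ≤ ENNReal.ofReal δ)
    (h : Fᶜ ⊆ E) : ENNReal.ofReal (1 - δ) ≤ P E := by
  rw [ENNReal.ofReal_sub _ hδ, ENNReal.ofReal_one, tsub_le_iff_right]
  have hcover : Set.univ ⊆ E ∪ F := fun ω _ => (em (ω ∈ F)).elim .inr fun hω => .inl (h hω)
  calc 1 = P Set.univ := measure_univ.symm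
    _ ≤ P E + P F := (measure_mono hcover).trans (measure_union_le _ _)
    _ ≤ P E + ENNReal.ofReal δ := by gcongr

section VarianceWeights

theorem sum_sq_max_le (d : ℕ) (R : ℝ) (σ : ℕ → ℝ) (T : ℕ) :
    ∑ t ∈ Icc 1 T, max (σ t) (R / Real.sqrt d) ^ 2 ≤ T * R ^ 2 / d + ∑ t ∈ Icc 1 T, σ t ^ 2 := by
  have hterm : ∀ t ∈ Icc 1 T, max (σ t) (R / Real.sqrt d) ^ 2 ≤ R ^ 2 / d + σ t ^ 2 := fun t _ => by
    have hsq : (R / Real.sqrt d) ^ 2 = R ^ 2 / d := by rw [div_pow, Real.sq_sqrt d.cast_nonneg]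
    rcases max_choice (σ t) (R / Real.sqrt d) with h | h <;> rw [h]
    · exact le_add_of_nonneg_left (by positivity)
    · exact hsq.trans_le (le_add_of_nonneg_right (sq_nonneg _))
  refine (sum_le_sum hterm).trans_eq ?_
  rw [sum_add_distrib, sum_const, Nat.card_Icc, Nat.add_sub_cancel, nsmul_eq_mul, mul_div_assoc]

variable {d : ℕ}

theorem log_one_add_div_weight (hd : 1 ≤ d) (A B R : ℝ) (T : ℕ) :
    Real.log (1 + T * A ^ 2 / (d * (1 / B ^ 2) * (R / Real.sqrt d) ^ 2)) =
      Real.log (1 + T * A ^ 2 * B ^ 2 / R ^ 2) := by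
  have hd' : (0 : ℝ) < d := by exact_mod_cast hd
  rw [div_pow, Real.sq_sqrt hd'.le]
  field_simp

theorem confRadius_weight {R : ℝ} (hd : 1 ≤ d) (hR : R ≠ 0) (A B δ : ℝ) (T : ℕ) :
    confRadius d A R (1 / B ^ 2) δ (R / Real.sqrt d) T =
      8 * Real.sqrt (d * Real.log (1 + T * A ^ 2 * B ^ 2 / R ^ 2) * confLevel δ T) +
        4 * Real.sqrt d * confLevel δ T := by
  rw [confRadius, log_one_add_div_weight hd, div_div_cancel₀ hR]

theorem sqrt_one_div_sq_mul_self {B : ℝ} (hB : 0 < B) : Real.sqrt (1 / B ^ 2) * B = 1 := by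
  rw [← _root_.one_div_pow, Real.sqrt_sq (by positivity), one_div_mul_cancel hB.ne']

end VarianceWeights

/-- Variance-aware regret bound for Weighted OFUL with weights `σ̄_t = max{σ_t, R/√d}`
and regularization `λ = 1/B²`. -/
theorem statement6 {Ω : Type*} {m : MeasurableSpace Ω} (P : Measure Ω) [IsProbabilityMeasure P]
    (G : Filtration ℕ m) {d : ℕ} (hd : 1 ≤ d)
    (δ B A R : ℝ) (μs : Fin d → ℝ)
    (hB : 0 < B) (hR : 0 < R) (hδ0 : 0 < δ) (hδ1 : δ < 1)
    (hμB : Real.sqrt (μs ⬝ᵥ μs) ≤ B)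
    (D : ℕ → Ω → Set (Fin d → ℝ)) (a astar : ℕ → Ω → Fin d → ℝ) (ε σv : ℕ → Ω → ℝ)
    (hD : ∀ t, 1 ≤ t → ∀ ω, ∀ v ∈ D t ω, Real.sqrt (v ⬝ᵥ v) ≤ A ∧ |v ⬝ᵥ μs| ≤ 1)
    (ha : ∀ t, 1 ≤ t → ∀ ω, a t ω ∈ D t ω)
    (hastar : ∀ t, 1 ≤ t → ∀ ω, astar t ω ∈ D t ω)
    (ha_meas : ∀ t, 1 ≤ t → Measurable[G t] (a t))
    (hσ_meas : ∀ t, 1 ≤ t → Measurable[G t] (σv t))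
    (hσ_nonneg : ∀ t, 1 ≤ t → ∀ ω, 0 ≤ σv t ω)
    (hε_meas : ∀ t, 1 ≤ t → Measurable[G (t + 1)] (ε t))
    (hε_bdd : ∀ t, 1 ≤ t → ∀ᵐ ω ∂P, |ε t ω| ≤ R)
    (hε_mean : ∀ t, 1 ≤ t → P[ε t|G t] =ᵐ[P] 0)
    (hε_var : ∀ t, 1 ≤ t → ∀ᵐ ω ∂P, (P[(fun ω' => ε t ω' ^ 2)|G t]) ω ≤ (σv t ω) ^ 2)
    (hopt : ∀ t, 1 ≤ t → ∀ ω,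
      ∃ μt ∈ confSet (1 / B ^ 2) B
          (betaHat d A R (1 / B ^ 2) δ
            (fun i => max (σv i ω) (R / Real.sqrt d)) (t - 1))
          (wGram (1 / B ^ 2) (fun i => a i ω)
            (fun i => max (σv i ω) (R / Real.sqrt d)) (t - 1))
          (wEst (1 / B ^ 2) (fun i => a i ω)
            (fun i => max (σv i ω) (R / Real.sqrt d))
            (fun i => μs ⬝ᵥ a i ω + ε i ω) (t - 1)),
        ∀ v ∈ D t ω,
          ∀ μ ∈ confSet (1 / B ^ 2) B
              (betaHat d A R (1 / B ^ 2) δ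
                (fun i => max (σv i ω) (R / Real.sqrt d)) (t - 1))
              (wGram (1 / B ^ 2) (fun i => a i ω)
                (fun i => max (σv i ω) (R / Real.sqrt d)) (t - 1))
              (wEst (1 / B ^ 2) (fun i => a i ω)
                (fun i => max (σv i ω) (R / Real.sqrt d))
                (fun i => μs ⬝ᵥ a i ω + ε i ω) (t - 1)),
            v ⬝ᵥ μ ≤ a t ω ⬝ᵥ μt)
    (T : ℕ) (hT : 1 ≤ T) :
    ENNReal.ofReal (1 - δ) ≤
      P {ω |
        ∑ t ∈ Finset.Icc 1 T, (astar t ω ⬝ᵥ μs - a t ω ⬝ᵥ μs) ≤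
          4 * (d : ℝ) * Real.log (1 + (T : ℝ) * A ^ 2 * B ^ 2 / R ^ 2) +
            2 * (8 * Real.sqrt ((d : ℝ) * Real.log (1 + (T : ℝ) * A ^ 2 * B ^ 2 / R ^ 2) *
                    Real.log (4 * (T : ℝ) ^ 2 / δ)) +
                  4 * Real.sqrt (d : ℝ) * Real.log (4 * (T : ℝ) ^ 2 / δ) + 1) *
              Real.sqrt (2 * (d : ℝ) * Real.log (1 + (T : ℝ) * A ^ 2 * B ^ 2 / R ^ 2)) *
              Real.sqrt ((T : ℝ) * R ^ 2 / (d : ℝ) +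
                ∑ t ∈ Finset.Icc 1 T, (σv t ω) ^ 2)} := by
  have hm : 0 < R / Real.sqrt d := by positivity
  have hle_max : ∀ t ω, R / Real.sqrt d ≤ max (σv t ω) (R / Real.sqrt d) :=
    fun _ _ => le_max_right _ _
  have hconf := measure_exists_sq_betaHat_lt_noiseEnergy_le (lam := 1 / B ^ 2) hd (by positivity)
    hR hδ0 hδ1 (fun t ht ω => (Real.sqrt_le_iff.1 (hD t ht ω _ (ha t ht ω)).1).2) ha_meas
    (fun t _ ω => hm.trans_le (hle_max t ω)) (fun t ht => (hσ_meas t ht).max measurable_const)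
    hε_meas hε_bdd hε_mean (fun t ht => (hε_var t ht).mono fun ω hω =>
      hω.trans (pow_le_pow_left₀ (hσ_nonneg t ht ω) (le_max_left _ _) 2)) T
  refine ofReal_one_sub_le_measure hδ0.le hconf fun ω hω => ?_
  have hregret := sum_regret_le (lam := 1 / B ^ 2) (T := T) hd (by positivity) hR.le hδ0 hδ1 hm
    (fun t _ => hle_max t ω) hμB (fun t ht => hD t ht ω) (fun t ht => ha t ht ω)
    (fun t ht => hastar t ht ω) (fun t ht => hopt t ht ω)
    (fun t ht => not_lt.1 fun hlt => hω ⟨t, ht, hlt⟩)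
  rw [log_one_add_div_weight hd, confRadius_weight hd hR.ne', sqrt_one_div_sq_mul_self hB,
    ← mul_assoc, ← mul_assoc] at hregret
  have hlevel := confLevel_nonneg hδ0 hδ1 T
  refine hregret.trans ?_
  rw [confLevel]
  gcongr
  exact sum_sq_max_le d R (fun t => σv t ω) T
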